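/- For every integer L ≥ 0, if n = 1 then ∑_{m∈ℤ, m≥0} q^{m²} [L−m choose m]_q = ∑_{j∈ℤ} ( q^{j(10j+1)} [L; 5j]_2 − q^{(4j+2)(5j+2)/2} [L; 5j+2]_2 ); more generally for the Cartan matrix C_n of A_n, ∑_{m∈ℤ^n_{≥0}} q^{(1/2) m·C_n·m} ∏_{j=1}^n [L·δ_{j,1} + m_j − (C_n m)_j choose m_j]_q = ∑_{j∈ℤ} ( q^{j((n+3)(n+4)j+2)/2} [L; (n+4)j]_2 − q^{((n+3)j+2)((n+4)j+2)/2} [L; (n+4)j+2]_2 ). -/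

import Mathlib

open Finset

/-- The variable `q`, realized as the generator of the field of rational functions over `ℚ`. -/
noncomputable def qq : RatFunc ℚ := RatFunc.X

/-- `(x)_n = ∏_{j=1}^n (1 - x^j)`. -/
noncomputable def qPoch (x : RatFunc ℚ) (n : ℕ) : RatFunc ℚ :=
  ∏ j ∈ Finset.range n, (1 - x ^ (j + 1))

/-- Gaussian binomial coefficient `[n choose k]_x`, zero unless `0 ≤ k ≤ n`. -/
noncomputable def qBin (x : RatFunc ℚ) (n k : ℤ) : RatFunc ℚ :=
  if 0 ≤ k ∧ k ≤ n then qPoch x n.toNat / (qPoch x k.toNat * qPoch x (n - k).toNat) else 0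

/-- The `q`-trinomial coefficient `[L, b; a]_2` in base `x`. -/
noncomputable def qTri (x : RatFunc ℚ) (L : ℕ) (b a : ℤ) : RatFunc ℚ :=
  ∑ k ∈ Finset.range (L + 1),
    x ^ ((k : ℤ) * (k + b)) * qBin x (L : ℤ) (k : ℤ) * qBin x ((L : ℤ) - k) ((k : ℤ) + a)

/-- The `q`-trinomial `T_n(L, a)`, written in terms of `s = q^{1/2}` (so the base is `s^2`):
`T_n(L,a) = ∑ s^{r(r-n)} (s²)_L / ((s²)_{(L-a-r)/2} (s²)_{(L+a-r)/2} (s²)_r)`,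
the sum over `r ≥ 0` with `L - a - r` even and `r ≤ L - |a|`; zero for `|a| > L`. -/
noncomputable def qT (s : RatFunc ℚ) (n : ℤ) (L : ℕ) (a : ℤ) : RatFunc ℚ :=
  ∑ r ∈ Finset.range (L + 1),
    if Even ((L : ℤ) - a - r) ∧ (r : ℤ) ≤ (L : ℤ) - |a| then
      s ^ ((r : ℤ) * ((r : ℤ) - n)) * qPoch (s ^ 2) L /
        (qPoch (s ^ 2) (((L : ℤ) - a - r) / 2).toNat *
          qPoch (s ^ 2) (((L : ℤ) + a - r) / 2).toNat * qPoch (s ^ 2) r)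
    else 0

/-- The Cartan matrix of the Lie algebra `A_n`. -/
def cartanA (n : ℕ) (i j : Fin n) : ℤ :=
  if i = j then 2 else if |(i : ℤ) - (j : ℤ)| = 1 then -1 else 0

/-!
The right-hand side is reached by climbing. For integers `a`, `b` of the same sign the refined
trinomial coefficients `T(L, M, a, b)` satisfy the Bailey-type summation
`∑ i, q ^ (i² / 2) [L + M - i, L] T(L - i, i, a, b) = q ^ (b² / 2) T(L, M, a + b, b)`, because for
fixed `L` both sides solve the same second-order recurrence in `M`, whose inhomogeneity involves
only smaller `L` and smaller `b`. Hence the alternating sum of refined trinomials of modulus `k` is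
sent to the one of modulus `k + 1`. For `k = 2` this sum telescopes to a delta function, so for
`k = 4` it is the single term `q ^ (L² / 2) [M, L]`. On the fermionic side, adjoining a row to the
Cartan matrix is exactly one such summation. A last summation along `L + M = const` removes `M` and
turns refined trinomials into ordinary ones, which gives the modulus `n + 4`.
-/

variable {K : Type*} [Field K]

/-! ### Gaussian binomial coefficients -/

section GaussBinom

variable {q : K}

/-- The Gaussian binomial coefficient with a natural upper index, built by the `q`-Pascal rule so
that no division is needed and `q` may be a root of unity. -/
def gaussBinomNat (q : K) : ℕ → ℤ → K
  | 0, k => if k = 0 then 1 else 0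
  | n + 1, k => gaussBinomNat q n (k - 1) + q ^ k * gaussBinomNat q n k

/-- The Gaussian binomial coefficient `[N choose k]_q`, zero unless `0 ≤ k ≤ N`; it replaces the
quotient `qBin` throughout the argument. -/
def gaussBinom (q : K) (N k : ℤ) : K :=
  if 0 ≤ N then gaussBinomNat q N.toNat k else 0

lemma gaussBinomNat_eq_zero {n : ℕ} {k : ℤ} (h : k < 0 ∨ n < k) : gaussBinomNat q n k = 0 := by
  induction n generalizing k with
  | zero => exact if_neg (by omega)
  | succ n ih => rw [gaussBinomNat, ih (by omega), ih (by omega), mul_zero, add_zero]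

lemma gaussBinom_eq_zero {N k : ℤ} (h : k < 0 ∨ N < k) : gaussBinom q N k = 0 := by
  rw [gaussBinom]
  split_ifs with hN
  · exact gaussBinomNat_eq_zero (by omega)
  · rfl

lemma bounds_of_gaussBinom_ne_zero {N k : ℤ} (h : gaussBinom q N k ≠ 0) : 0 ≤ k ∧ k ≤ N := by
  by_contra hk
  exact h (gaussBinom_eq_zero (by omega))

lemma gaussBinom_pascal {N k : ℤ} (h : N ≠ 0 ∨ k ≠ 0) :
    gaussBinom q N k = gaussBinom q (N - 1) (k - 1) + q ^ k * gaussBinom q (N - 1) k := by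
  rcases le_or_gt N 0 with hN | hN
  · simp only [gaussBinom_eq_zero (q := q) (N := N) (k := k) (by omega),
      gaussBinom_eq_zero (q := q) (N := N - 1) (k := k - 1) (by omega),
      gaussBinom_eq_zero (q := q) (N := N - 1) (k := k) (by omega), mul_zero, add_zero]
  · obtain ⟨n, rfl⟩ : ∃ n : ℕ, N = n + 1 := ⟨(N - 1).toNat, by omega⟩
    simp only [gaussBinom, add_sub_cancel_right, Nat.cast_nonneg, if_true, Int.toNat_natCast,
      if_pos (show (0 : ℤ) ≤ n + 1 by omega), Int.toNat_natCast_add_one]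
    rfl

lemma gaussBinom_zero_right {N : ℤ} (hN : 0 ≤ N) : gaussBinom q N 0 = 1 := by
  induction N, hN using Int.leInduction with
  | base => rfl
  | succ n hn ih =>
    rw [gaussBinom_pascal (by omega), gaussBinom_eq_zero (k := 0 - 1) (by omega),
      add_sub_cancel_right, ih, zpow_zero, mul_one, zero_add]

lemma gaussBinom_self {N : ℤ} (hN : 0 ≤ N) : gaussBinom q N N = 1 := by
  induction N, hN using Int.leInduction with
  | base => rfl
  | succ n hn ih =>
    rw [gaussBinom_pascal (by omega), gaussBinom_eq_zero (k := n + 1) (by omega),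
      add_sub_cancel_right, ih, mul_zero, add_zero]

lemma gaussBinom_pascal' (hq : q ≠ 0) {N k : ℤ} (h : N ≠ 0 ∨ k ≠ 0) :
    gaussBinom q N k = gaussBinom q (N - 1) k + q ^ (N - k) * gaussBinom q (N - 1) (k - 1) := by
  rcases le_or_gt N 0 with hN | hN
  · simp only [gaussBinom_eq_zero (q := q) (N := N) (k := k) (by omega),
      gaussBinom_eq_zero (q := q) (N := N - 1) (k := k - 1) (by omega),
      gaussBinom_eq_zero (q := q) (N := N - 1) (k := k) (by omega), mul_zero, add_zero]
  replace hN : 1 ≤ N := hN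
  clear h
  induction N, hN using Int.leInduction generalizing k with
  | base =>
    rw [gaussBinom_pascal (by omega), sub_self]
    rcases eq_or_ne k 0 with rfl | h0
    · simp [gaussBinom_eq_zero (q := q) (N := 0) (k := -1)]
    rcases eq_or_ne k 1 with rfl | h1
    · simp [gaussBinom_eq_zero (q := q) (N := 0) (k := 1)]
    simp only [gaussBinom_eq_zero (q := q) (N := 0) (k := k) (by omega),
      gaussBinom_eq_zero (q := q) (N := 0) (k := k - 1) (by omega), mul_zero]
  | succ n hn ih =>
    have hexp : q ^ k * q ^ (n - k) = q ^ (n + 1 - k) * q ^ (k - 1) := by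
      rw [← zpow_add₀ hq, ← zpow_add₀ hq]
      congr 1
      ring
    have h₁ := ih (k := k)
    have h₂ := ih (k := k - 1)
    have h₃ := gaussBinom_pascal (q := q) (N := n) (k := k) (by omega)
    have h₄ := gaussBinom_pascal (q := q) (N := n) (k := k - 1) (by omega)
    rw [sub_sub_eq_add_sub] at h₂
    rw [gaussBinom_pascal (by omega), add_sub_cancel_right]
    linear_combination h₂ + q ^ k * h₁ - h₃ - q ^ (n + 1 - k) * h₄ +
      gaussBinom q (n - 1) (k - 1) * hexp

/-- Both sides are the multiple of `gaussBinom q (N - 1) k` by which the two Pascal rules differ. -/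
lemma one_sub_zpow_mul_gaussBinom (hq : q ≠ 0) (N k : ℤ) :
    (1 - q ^ k) * gaussBinom q N k = (1 - q ^ N) * gaussBinom q (N - 1) (k - 1) := by
  by_cases h : N ≠ 0 ∨ k ≠ 0
  · have hexp : q ^ k * q ^ (N - k) = q ^ N := by rw [← zpow_add₀ hq, add_sub_cancel]
    linear_combination gaussBinom_pascal (q := q) h - q ^ k * gaussBinom_pascal' hq h -
      gaussBinom q (N - 1) (k - 1) * hexp
  · obtain ⟨rfl, rfl⟩ : N = 0 ∧ k = 0 := by omega
    simp

lemma one_sub_zpow_mul_gaussBinom' (hq : q ≠ 0) (N k : ℤ) :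
    (1 - q ^ k) * gaussBinom q N k = (1 - q ^ (N - k + 1)) * gaussBinom q N (k - 1) := by
  by_cases h : N + 1 ≠ 0 ∨ k ≠ 0
  · have h₁ := gaussBinom_pascal (q := q) h
    have h₂ := gaussBinom_pascal' hq h
    rw [add_sub_cancel_right] at h₁ h₂
    rw [show N - k + 1 = N + 1 - k by ring]
    linear_combination h₁ - h₂
  · obtain ⟨rfl, rfl⟩ : N = -1 ∧ k = 0 := by omega
    simp

lemma gaussBinom_add_one_mul {L : ℤ} (hL : 0 ≤ L) (x y : ℤ) :
    gaussBinom q (L + 1) x * gaussBinom q (L + 1 - x) y =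
      gaussBinom q L (x - 1) * gaussBinom q (L - (x - 1)) y +
        q ^ x * (gaussBinom q L x * gaussBinom q (L - x) (y - 1)) +
        q ^ x * q ^ y * (gaussBinom q L x * gaussBinom q (L - x) y) := by
  have hx := gaussBinom_pascal (q := q) (N := L + 1) (k := x) (by omega)
  rw [add_sub_cancel_right] at hx
  rw [show L - (x - 1) = L + 1 - x by ring, hx]
  by_cases h : L + 1 - x ≠ 0 ∨ y ≠ 0
  · have hy := gaussBinom_pascal (q := q) h
    rw [show L + 1 - x - 1 = L - x by ring] at hy
    linear_combination q ^ x * gaussBinom q L x * hy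
  · rw [gaussBinom_eq_zero (N := L) (k := x) (by omega)]
    ring

/-- Both products are the `q`-multinomial coefficient with lower entries `x`, `y`, `L - x - y`. -/
lemma gaussBinom_mul_gaussBinom_comm (hq : q ≠ 0) (L x y : ℤ) :
    gaussBinom q L x * gaussBinom q (L - x) y = gaussBinom q L y * gaussBinom q (L - y) x := by
  rcases lt_or_ge L 0 with hL | hL
  · rw [gaussBinom_eq_zero (N := L) (by omega), gaussBinom_eq_zero (N := L) (by omega),
      zero_mul, zero_mul]
  induction L, hL using Int.leInduction generalizing x y with
  | base =>
    by_cases hx : x = 0 <;> by_cases hy : y = 0 <;>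
      simp [gaussBinom, gaussBinomNat, hx, hy]
  | succ n hn ih =>
    have hcross : (1 - q ^ y) * (gaussBinom q n (x - 1) * gaussBinom q (n - (x - 1)) y) =
        (1 - q ^ x) * (gaussBinom q n x * gaussBinom q (n - x) (y - 1)) := by
      have hy := one_sub_zpow_mul_gaussBinom hq (n - (x - 1)) y
      have hx := one_sub_zpow_mul_gaussBinom' hq n x
      rw [show n - (x - 1) = n - x + 1 by ring] at hy ⊢
      rw [add_sub_cancel_right] at hy
      linear_combination gaussBinom q n (x - 1) * hy - gaussBinom q (n - x) (y - 1) * hx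
    linear_combination gaussBinom_add_one_mul (q := q) hn x y -
      gaussBinom_add_one_mul (q := q) hn y x +
      q ^ y * ih (x - 1) y + ih x (y - 1) + q ^ x * q ^ y * ih x y + hcross

end GaussBinom

/-! ### Finitely supported sums over the integers -/

section Finsum

variable {A : Type*} [AddCommMonoid A] {f : ℤ → A}

lemma hasFiniteSupport_of_bounded (lo hi : ℤ) (h : ∀ x, f x ≠ 0 → lo ≤ x ∧ x ≤ hi) :
    Function.HasFiniteSupport f :=
  (Set.finite_Icc lo hi).subset h

lemma finsum_eq_sum_range (N : ℕ)
    (h : ∀ x, f x ≠ 0 → 0 ≤ x ∧ x ≤ N) : ∑ᶠ x, f x = ∑ x ∈ range (N + 1), f x := by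
  rw [finsum_eq_sum_of_support_subset f (s := (range (N + 1)).map Nat.castEmbedding) fun x hx ↦ ?_]
  · rw [sum_map]
    rfl
  · have := h x hx
    simp only [coe_map, coe_range, Set.mem_image, Set.mem_Iio, Nat.castEmbedding_apply]
    exact ⟨x.toNat, by omega, by omega⟩

lemma finsum_comp_sub_right (f : ℤ → A) (c : ℤ) : ∑ᶠ x, f (x - c) = ∑ᶠ x, f x :=
  finsum_comp_equiv (Equiv.subRight c)

lemma hasFiniteSupport_comp_sub_right (hf : Function.HasFiniteSupport f) (c : ℤ) :
    Function.HasFiniteSupport fun x ↦ f (x - c) :=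
  hf.fun_comp_of_injective (sub_left_injective (b := c))

lemma finsum_comm_of_bounded {f : ℤ → ℤ → A} (lo hi : ℤ)
    (h : ∀ i j, f i j ≠ 0 → (lo ≤ i ∧ i ≤ hi) ∧ lo ≤ j ∧ j ≤ hi) :
    ∑ᶠ i, ∑ᶠ j, f i j = ∑ᶠ j, ∑ᶠ i, f i j := by
  have hf : Function.HasFiniteSupport fun p : ℤ × ℤ ↦ f p.1 p.2 :=
    ((Set.finite_Icc lo hi).prod (Set.finite_Icc lo hi)).subset fun p hp ↦ h p.1 p.2 hp
  rw [← finsum_curry _ hf, ← finsum_comp_equiv (Equiv.prodComm ℤ ℤ)]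
  exact finsum_curry (fun p : ℤ × ℤ ↦ f p.2 p.1)
    (hf.fun_comp_of_injective (Equiv.prodComm ℤ ℤ).injective)

lemma finsum_eq_finsum_add_mul {f g h : ℤ → K} (c : K) (hg : Function.HasFiniteSupport g)
    (hh : Function.HasFiniteSupport h) (H : ∀ x, f x = g x + c * h x) :
    ∑ᶠ x, f x = ∑ᶠ x, g x + c * ∑ᶠ x, h x := by
  rw [mul_finsum, ← finsum_add_distrib hg (by fun_prop), finsum_congr H]

lemma finsum_eq_add_four {f g₁ g₂ g₃ g₄ : ℤ → K} (c₁ c₂ c₃ c₄ : K)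
    (h₁ : Function.HasFiniteSupport g₁) (h₂ : Function.HasFiniteSupport g₂)
    (h₃ : Function.HasFiniteSupport g₃) (h₄ : Function.HasFiniteSupport g₄)
    (H : ∀ x, f x = c₁ * g₁ x + c₂ * g₂ x + c₃ * g₃ x + c₄ * g₄ x) :
    ∑ᶠ x, f x =
      c₁ * ∑ᶠ x, g₁ x + c₂ * ∑ᶠ x, g₂ x + c₃ * ∑ᶠ x, g₃ x + c₄ * ∑ᶠ x, g₄ x := by
  rw [mul_finsum, mul_finsum, mul_finsum, mul_finsum,
    ← finsum_add_distrib (by fun_prop) (by fun_prop),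
    ← finsum_add_distrib (by fun_prop) (by fun_prop),
    ← finsum_add_distrib (by fun_prop) (by fun_prop), finsum_congr H]

end Finsum

/-! ### Refined trinomial coefficients -/

variable {s : K}

lemma zpow_mul_zpow_congr (hs : s ≠ 0) {a b c d : ℤ} (h : a + b = c + d) :
    s ^ a * s ^ b = s ^ c * s ^ d := by
  rw [← zpow_add₀ hs, ← zpow_add₀ hs, h]

lemma sq_mul_zpow_congr (hs : s ≠ 0) {a b : ℤ} (h : a + 2 = b) : s ^ 2 * s ^ a = s ^ b := by
  rw [← h, zpow_add₀ hs, zpow_ofNat, mul_comm]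

lemma sq_zpow (s : K) (k : ℤ) : (s ^ 2) ^ k = s ^ (2 * k) := by
  rw [zpow_mul, zpow_ofNat]

section PreTrinomial

/-- The summand of `preTrinomial`. -/
def preTrinomialTerm (s : K) (M α β L a Y : ℤ) : K :=
  s ^ ((L - 2 * Y + a) ^ 2) * gaussBinom (s ^ 2) M (L - 2 * Y + a) *
    gaussBinom (s ^ 2) (α + Y - a) α * gaussBinom (s ^ 2) (β + Y) β

/-- The refined trinomial coefficient with its three parameters `M`, `M + b`, `M - b` replaced by
independent ones `M`, `α`, `β`, so that each of them can be lowered on its own. -/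
noncomputable def preTrinomial (s : K) (M α β L a : ℤ) : K :=
  ∑ᶠ Y, preTrinomialTerm s M α β L a Y

lemma bounds_of_preTrinomialTerm_ne_zero {M α β L a Y : ℤ}
    (h : preTrinomialTerm s M α β L a Y ≠ 0) :
    0 ≤ Y ∧ Y ≤ L ∧ a ≤ Y ∧ 2 * Y ≤ L + a ∧ 0 ≤ M ∧ 0 ≤ α ∧ 0 ≤ β := by
  have hβ := bounds_of_gaussBinom_ne_zero (right_ne_zero_of_mul h)
  have hα := bounds_of_gaussBinom_ne_zero (right_ne_zero_of_mul (left_ne_zero_of_mul h))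
  have hM := bounds_of_gaussBinom_ne_zero
    (right_ne_zero_of_mul (left_ne_zero_of_mul (left_ne_zero_of_mul h)))
  omega

@[fun_prop]
lemma hasFiniteSupport_preTrinomialTerm (M α β L a : ℤ) :
    Function.HasFiniteSupport (preTrinomialTerm s M α β L a) :=
  hasFiniteSupport_of_bounded 0 L fun Y hY ↦ by
    have := bounds_of_preTrinomialTerm_ne_zero hY
    omega

lemma preTrinomial_eq_zero {M α β L a : ℤ}
    (h : M < 0 ∨ α < 0 ∨ β < 0 ∨ L < 0 ∨ L < a ∨ L < -a) : preTrinomial s M α β L a = 0 := by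
  refine finsum_eq_zero_of_forall_eq_zero fun Y ↦ ?_
  by_contra hY
  have := bounds_of_preTrinomialTerm_ne_zero hY
  omega

lemma preTrinomial_eq_add_M (hs : s ≠ 0) {M : ℤ} (hM : M ≠ 0) (α β L a : ℤ) :
    preTrinomial s M α β L a =
      preTrinomial s (M - 1) α β L a + s ^ (2 * M - 1) * preTrinomial s (M - 1) α β (L - 1) a := by
  refine finsum_eq_finsum_add_mul _ (by fun_prop) (by fun_prop) fun Y ↦ ?_
  have hexp : s ^ ((L - 2 * Y + a) ^ 2) * s ^ (2 * (M - (L - 2 * Y + a))) =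
      s ^ (2 * M - 1) * s ^ ((L - 2 * Y + a - 1) ^ 2) := zpow_mul_zpow_congr hs (by ring)
  rw [preTrinomialTerm, preTrinomialTerm, preTrinomialTerm,
    gaussBinom_pascal' (pow_ne_zero 2 hs) (.inl hM), sq_zpow,
    show L - 1 - 2 * Y + a = L - 2 * Y + a - 1 by ring]
  linear_combination gaussBinom (s ^ 2) (M - 1) (L - 2 * Y + a - 1) *
    gaussBinom (s ^ 2) (α + Y - a) α * gaussBinom (s ^ 2) (β + Y) β * hexp

lemma preTrinomial_eq_add_left {α : ℤ} (hα : α ≠ 0) (M β L a : ℤ) :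
    preTrinomial s M α β L a =
      preTrinomial s M (α - 1) β L a + s ^ (2 * α) * preTrinomial s M α β (L - 1) (a + 1) := by
  refine finsum_eq_finsum_add_mul _ (by fun_prop) (by fun_prop) fun Y ↦ ?_
  rw [preTrinomialTerm, preTrinomialTerm, preTrinomialTerm, gaussBinom_pascal (.inr hα), sq_zpow,
    show L - 1 - 2 * Y + (a + 1) = L - 2 * Y + a by ring,
    show α + Y - (a + 1) = α + Y - a - 1 by ring, show α - 1 + Y - a = α + Y - a - 1 by ring]
  ring

lemma preTrinomial_eq_add_right {β a : ℤ} (h : β ≠ 0 ∨ 0 < a) (M α L : ℤ) :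
    preTrinomial s M α β L a =
      preTrinomial s M α (β - 1) L a + s ^ (2 * β) * preTrinomial s M α β (L - 1) (a - 1) := by
  rw [preTrinomial, preTrinomial, preTrinomial,
    ← finsum_comp_sub_right (preTrinomialTerm s M α β (L - 1) (a - 1)) 1]
  refine finsum_eq_finsum_add_mul _ (by fun_prop)
    (hasFiniteSupport_comp_sub_right (by fun_prop) 1) fun Y ↦ ?_
  simp only [preTrinomialTerm]
  rw [show L - 1 - 2 * (Y - 1) + (a - 1) = L - 2 * Y + a by ring,
    show α + (Y - 1) - (a - 1) = α + Y - a by ring, show β + (Y - 1) = β + Y - 1 by ring,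
    show β - 1 + Y = β + Y - 1 by ring]
  by_cases h0 : β = 0 ∧ Y = 0
  · rw [gaussBinom_eq_zero (N := α + Y - a) (by omega)]
    simp only [mul_zero, zero_mul, add_zero]
  · rw [gaussBinom_pascal (N := β + Y) (by omega), sq_zpow]
    ring

/-- The case `α = 0` of `preTrinomial_eq_add_left`: the Pascal rule now fails for `Y = a`. -/
lemma preTrinomial_zero_left (M β L a : ℤ) :
    preTrinomial s M 0 β L a = preTrinomial s M 0 β (L - 1) (a + 1) +
      s ^ ((L - a) ^ 2) * gaussBinom (s ^ 2) M (L - a) * gaussBinom (s ^ 2) (β + a) β := by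
  rw [← sub_eq_iff_eq_add', preTrinomial, preTrinomial,
    ← finsum_sub_distrib (by fun_prop) (by fun_prop), finsum_eq_single _ a]
  · simp only [preTrinomialTerm]
    rw [gaussBinom_eq_zero (N := 0 + a - (a + 1)) (by omega),
      gaussBinom_zero_right (N := 0 + a - a) (by omega), show L - 2 * a + a = L - a by ring]
    ring
  · intro Y hY
    simp only [preTrinomialTerm]
    rw [show L - 1 - 2 * Y + (a + 1) = L - 2 * Y + a by ring]
    rcases lt_or_gt_of_ne hY with hY | hY
    · rw [gaussBinom_eq_zero (N := 0 + Y - (a + 1)) (by omega),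
        gaussBinom_eq_zero (N := 0 + Y - a) (by omega), sub_self]
    · rw [gaussBinom_zero_right (N := 0 + Y - (a + 1)) (by omega),
        gaussBinom_zero_right (N := 0 + Y - a) (by omega), sub_self]

lemma preTrinomial_sub_two_left (hs : s ≠ 0) {α : ℤ} (h₀ : α ≠ 0) (h₁ : α ≠ 1) (M β L a : ℤ) :
    preTrinomial s M (α - 2) β L a =
      preTrinomial s M α β L a -
        (1 + s ^ 2) * s ^ (2 * α - 2) * preTrinomial s M α β (L - 1) (a + 1)
        + s ^ (4 * α - 2) * preTrinomial s M α β (L - 2) (a + 2) := by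
  have hα := preTrinomial_eq_add_left (s := s) h₀ M β L a
  have hX := preTrinomial_eq_add_left (s := s) h₀ M β (L - 1) (a + 1)
  have hα₁ := preTrinomial_eq_add_left (s := s) (sub_ne_zero.mpr h₁) M β L a
  rw [sub_sub, add_assoc, one_add_one_eq_two] at hX
  rw [sub_sub, one_add_one_eq_two, mul_sub, mul_one] at hα₁
  have e₁ : s ^ (2 * α - 2) * s ^ (2 * α) = s ^ (4 * α - 2) * s ^ (0 : ℤ) :=
    zpow_mul_zpow_congr hs (by ring)
  have e₂ := sq_mul_zpow_congr hs (sub_add_cancel (2 * α) 2)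
  rw [zpow_zero] at e₁
  linear_combination s ^ (2 * α - 2) * hX - hα - hα₁ +
    preTrinomial s M α β (L - 2) (a + 2) * e₁ + preTrinomial s M α β (L - 1) (a + 1) * e₂

lemma preTrinomial_M_second_difference (hs : s ≠ 0) {M : ℤ} (h₀ : M ≠ 0) (h₁ : M ≠ 1)
    (α β L a : ℤ) :
    preTrinomial s M α β L a - (1 + s ^ 2) * preTrinomial s (M - 1) α β L a +
        s ^ 2 * preTrinomial s (M - 2) α β L a =
      s ^ (4 * M - 4) * preTrinomial s (M - 2) α β (L - 2) a := by
  have hM := preTrinomial_eq_add_M hs h₀ α β L a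
  have hM₁ := preTrinomial_eq_add_M hs (sub_ne_zero.mpr h₁) α β L a
  have hL := preTrinomial_eq_add_M hs (sub_ne_zero.mpr h₁) α β (L - 1) a
  rw [sub_sub M, one_add_one_eq_two] at hM₁ hL
  rw [sub_sub L, one_add_one_eq_two] at hL
  have e₁ : s ^ (2 * M - 1) * s ^ (2 * (M - 1) - 1) = s ^ (4 * M - 4) * s ^ (0 : ℤ) :=
    zpow_mul_zpow_congr hs (by ring)
  have e₂ := sq_mul_zpow_congr hs (show 2 * (M - 1) - 1 + 2 = 2 * M - 1 by ring)
  rw [zpow_zero] at e₁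
  linear_combination hM - s ^ 2 * hM₁ + s ^ (2 * M - 1) * hL +
    preTrinomial s (M - 2) α β (L - 2) a * e₁ - preTrinomial s (M - 2) α β (L - 1) a * e₂

lemma preTrinomial_mixed_difference (hs : s ≠ 0) {α β a : ℤ} (hα : α ≠ 0) (ha : 0 ≤ a)
    (M L : ℤ) :
    preTrinomial s M α β L a - preTrinomial s M (α - 1) β L a - preTrinomial s M α (β - 1) L a +
        preTrinomial s M (α - 1) (β - 1) L a =
      s ^ (2 * (α + β)) * preTrinomial s M α β (L - 2) a := by
  have h := preTrinomial_eq_add_left (s := s) hα M β L a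
  have h' := preTrinomial_eq_add_left (s := s) hα M (β - 1) L a
  have hβ := preTrinomial_eq_add_right (s := s) (β := β) (a := a + 1) (by omega) M α (L - 1)
  rw [sub_sub L, one_add_one_eq_two, add_sub_cancel_right] at hβ
  linear_combination h - h' + s ^ (2 * α) * hβ +
    preTrinomial s M α β (L - 2) a * (zpow_add₀ hs (2 * α) (2 * β)).symm.trans
      (congrArg (s ^ ·) (mul_add 2 α β).symm)

lemma preTrinomial_corner_difference (hs : s ≠ 0) {M α β a : ℤ} (h : α + β + 3 = 2 * M)
    (hβα : β ≤ α) (ha : 0 ≤ a) (L : ℤ) :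
    preTrinomial s M α β L a - (1 + s ^ 2) * preTrinomial s (M - 1) α β L a +
      s ^ 2 * (preTrinomial s (M - 2) α (β - 1) L a + preTrinomial s (M - 2) (α - 1) β L a -
        preTrinomial s (M - 2) (α - 1) (β - 1) L a) = 0 := by
  rcases lt_or_ge β 0 with hβ | hβ
  · have h₀ (M α : ℤ) : preTrinomial s M α β L a = 0 := preTrinomial_eq_zero (by omega)
    have h₁ (M α : ℤ) : preTrinomial s M α (β - 1) L a = 0 := preTrinomial_eq_zero (by omega)
    simp only [h₀, h₁, mul_zero, sub_zero, add_zero]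
  have hM := preTrinomial_M_second_difference hs (M := M) (by omega) (by omega) α β L a
  have hαβ := preTrinomial_mixed_difference hs (α := α) (β := β) (by omega) ha (M - 2) L
  have e := sq_mul_zpow_congr hs (show 2 * (α + β) + 2 = 4 * M - 4 by linarith)
  linear_combination hM - s ^ 2 * hαβ - preTrinomial s (M - 2) α β (L - 2) a * e

lemma preTrinomial_second_difference (hs : s ≠ 0) {M α β a : ℤ} (h : α + β = 2 * M)
    (hβ : 0 ≤ β) (hβα : β + 2 ≤ α) (ha : 0 < a) (L : ℤ) :
    preTrinomial s M α β L a - (1 + s ^ 2) * preTrinomial s (M - 1) (α - 1) (β - 1) L a +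
        s ^ 2 * preTrinomial s (M - 2) (α - 2) (β - 2) L a =
      (1 + s ^ 2) * s ^ (2 * α - 2) * (preTrinomial s M α β (L - 1) (a + 1) -
        preTrinomial s (M - 1) (α - 1) (β - 1) (L - 1) (a + 1)) -
      s ^ (4 * α - 2) * preTrinomial s M α β (L - 2) (a + 2) +
      s ^ (2 * β) * (preTrinomial s (M - 1) (α - 2) β (L - 1) (a - 1) -
        preTrinomial s (M - 2) (α - 3) (β - 1) (L - 1) (a - 1)) +
      s ^ (2 * M - 1) * s ^ (2 * β) * preTrinomial s (M - 1) (α - 2) β (L - 2) (a - 1) := by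
  have corner := preTrinomial_corner_difference hs (M := M) (α := α - 2) (β := β - 1)
    (by omega) (by omega) ha.le L
  have two := preTrinomial_sub_two_left hs (α := α) (by omega) (by omega) M β L a
  have left := preTrinomial_eq_add_left (s := s) (α := α - 1) (by omega) (M - 1) (β - 1) L a
  have right := preTrinomial_eq_add_right (s := s) (β := β) (.inr ha) (M - 1) (α - 2) L
  have right₁ := preTrinomial_eq_add_right (s := s) (β := β) (.inr ha) (M - 1) (α - 2) (L - 1)
  have right₂ := preTrinomial_eq_add_right (s := s) (β := β - 1) (.inr ha) (M - 2) (α - 3) L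
  have up (β : ℤ) := preTrinomial_eq_add_M hs (M := M) (by omega) (α - 2) β L a
  have e := sq_mul_zpow_congr hs (show 2 * (β - 1) + 2 = 2 * β by ring)
  rw [sub_sub α, two_add_one_eq_three, sub_sub β, one_add_one_eq_two] at corner
  rw [sub_sub α, one_add_one_eq_two, mul_sub, mul_one] at left
  rw [sub_sub L, one_add_one_eq_two] at right₁
  rw [sub_sub β, one_add_one_eq_two] at right₂
  linear_combination corner - two - (1 + s ^ 2) * left + right + s ^ (2 * M - 1) * right₁ -
    s ^ 2 * right₂ + up β - up (β - 1) -
    preTrinomial s (M - 2) (α - 3) (β - 1) (L - 1) (a - 1) * e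

end PreTrinomial

section RefinedTrinomial

/-- The refined `q`-trinomial coefficient with lower entries `a`, `b` in base `q = s²`, as a
function of its upper entries `L`, `M`. It is the object on which the Bailey-type step acts. -/
noncomputable def refinedTrinomial (s : K) (a b L M : ℤ) : K :=
  preTrinomial s M (M + b) (M - b) L a

lemma refinedTrinomial_eq_zero {a b L M : ℤ}
    (h : M < 0 ∨ M < b ∨ M < -b ∨ L < 0 ∨ L < a ∨ L < -a) : refinedTrinomial s a b L M = 0 :=
  preTrinomial_eq_zero (by omega)

lemma refinedTrinomial_neg_neg (a b : ℤ) :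
    refinedTrinomial s (-a) (-b) = refinedTrinomial s a b := by
  funext L M
  rw [refinedTrinomial, preTrinomial,
    ← finsum_comp_sub_right (preTrinomialTerm s M (M + -b) (M - -b) L (-a)) a]
  refine finsum_congr fun Y ↦ ?_
  rw [preTrinomialTerm, preTrinomialTerm, show L - 2 * (Y - a) + -a = L - 2 * Y + a by ring,
    show M + -b + (Y - a) - -a = M - b + Y by ring, show M - -b + (Y - a) = M + b + Y - a by ring,
    ← sub_eq_add_neg, sub_neg_eq_add]
  ring

/-- A function on `ℤ × ℤ` that vanishes outside the quadrant `0 ≤ L`, `0 ≤ M`. -/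
def QuadrantSupported (F : ℤ → ℤ → K) : Prop :=
  ∀ ⦃L M⦄, F L M ≠ 0 → 0 ≤ L ∧ 0 ≤ M

lemma QuadrantSupported.hasFiniteSupport {F : ℤ → ℤ → K} (hF : QuadrantSupported F) (L : ℤ) :
    Function.HasFiniteSupport fun i ↦ F (L - i) i :=
  hasFiniteSupport_of_bounded 0 L fun i hi ↦ by
    have := hF hi
    omega

lemma QuadrantSupported.eq_zero {F : ℤ → ℤ → K} (hF : QuadrantSupported F) {L M : ℤ}
    (h : L < 0 ∨ M < 0) : F L M = 0 := by
  by_contra hLM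
  have := hF hLM
  omega

lemma QuadrantSupported.add {F G : ℤ → ℤ → K} (hF : QuadrantSupported F)
    (hG : QuadrantSupported G) : QuadrantSupported (F + G) := by
  intro L M h
  by_contra hLM
  exact h (by rw [Pi.add_apply, Pi.add_apply, hF.eq_zero (by omega), hG.eq_zero (by omega),
    add_zero])

lemma quadrantSupported_refinedTrinomial (a b : ℤ) :
    QuadrantSupported (refinedTrinomial s a b) := by
  intro L M h
  by_contra hLM
  exact h (refinedTrinomial_eq_zero (by omega))

/-- The shape shared by the recurrences of the refined trinomial coefficients `F`, in which `G`,
`H`, `P` are built from such coefficients with other lower entries or are `F` itself. The point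
`L = M = 0` has to be left out. -/
def IsTrinomialRec (s c d : K) (F G H P : ℤ → ℤ → K) : Prop :=
  ∀ ⦃L M⦄, L ≠ 0 ∨ M ≠ 0 → F L M = c * s ^ (2 * M) * G (L - 1) M - d * s ^ (4 * M) * H (L - 2) M +
    P L (M - 1) + s ^ (2 * M - 1) * P (L - 1) (M - 1)

lemma isTrinomialRec_refinedTrinomial (hs : s ≠ 0) {b : ℤ} (hb : 1 ≤ b) (a : ℤ) :
    IsTrinomialRec s ((1 + s ^ 2) * s ^ (2 * b - 2)) (s ^ (4 * b - 2)) (refinedTrinomial s a b)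
      (refinedTrinomial s (a + 1) b) (refinedTrinomial s (a + 2) b)
      (refinedTrinomial s a (b - 1)) := by
  intro L M _
  rcases lt_or_ge M b with hM | hM
  · have hT (a L : ℤ) : refinedTrinomial s a b L M = 0 := refinedTrinomial_eq_zero (by omega)
    have hP (L : ℤ) : refinedTrinomial s a (b - 1) L (M - 1) = 0 :=
      refinedTrinomial_eq_zero (by omega)
    simp only [hT, hP, mul_zero, sub_zero, add_zero]
  have h₁ := preTrinomial_sub_two_left hs (α := M + b) (by omega) (by omega) M (M - b) L a
  have h₂ := preTrinomial_eq_add_M hs (M := M) (by omega) (M + b - 2) (M - b) L a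
  have e₁ : s ^ (2 * b - 2) * s ^ (2 * M) = s ^ (2 * (M + b) - 2) * s ^ (0 : ℤ) :=
    zpow_mul_zpow_congr hs (by ring)
  have e₂ : s ^ (4 * b - 2) * s ^ (4 * M) = s ^ (4 * (M + b) - 2) * s ^ (0 : ℤ) :=
    zpow_mul_zpow_congr hs (by ring)
  rw [zpow_zero, mul_one] at e₁ e₂
  simp only [refinedTrinomial]
  rw [show M - 1 + (b - 1) = M + b - 2 by ring, show M - 1 - (b - 1) = M - b by ring]
  linear_combination h₂ - h₁ -
    (1 + s ^ 2) * preTrinomial s M (M + b) (M - b) (L - 1) (a + 1) * e₁ +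
    preTrinomial s M (M + b) (M - b) (L - 2) (a + 2) * e₂

lemma refinedTrinomial_zero_zero_right {L : ℤ} (hL : L ≠ 0) (a : ℤ) :
    refinedTrinomial s a 0 L 0 = refinedTrinomial s (a + 1) 0 (L - 1) 0 +
      refinedTrinomial s (a - 1) 0 (L - 1) 0 - refinedTrinomial s a 0 (L - 2) 0 := by
  have h₁ := preTrinomial_zero_left (s := s) 0 0 L a
  have h₂ := preTrinomial_zero_left (s := s) 0 0 (L - 1) (a - 1)
  have hend : gaussBinom (s ^ 2) 0 (L - a) * gaussBinom (s ^ 2) (0 + a) 0 =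
      gaussBinom (s ^ 2) 0 (L - a) * gaussBinom (s ^ 2) (0 + (a - 1)) 0 := by
    rcases lt_trichotomy L a with h | rfl | h
    · rw [gaussBinom_eq_zero (k := L - a) (by omega), zero_mul, zero_mul]
    · rcases lt_or_ge L 0 with h | h
      · rw [gaussBinom_eq_zero (N := 0 + L) (by omega),
          gaussBinom_eq_zero (N := 0 + (L - 1)) (by omega)]
      · rw [gaussBinom_zero_right (by omega), gaussBinom_zero_right (by omega)]
    · rw [gaussBinom_eq_zero (k := L - a) (by omega), zero_mul, zero_mul]
  rw [sub_sub L, one_add_one_eq_two, sub_add_cancel, sub_sub_sub_cancel_right] at h₂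
  simp only [refinedTrinomial, add_zero, sub_zero]
  linear_combination h₁ - h₂ + s ^ ((L - a) ^ 2) * hend

lemma isTrinomialRec_refinedTrinomial_zero (hs : s ≠ 0) (a : ℤ) :
    IsTrinomialRec s 1 1 (refinedTrinomial s a 0)
      (refinedTrinomial s (a + 1) 0 + refinedTrinomial s (a - 1) 0)
      (refinedTrinomial s a 0) (refinedTrinomial s a 0) := by
  intro L M hLM
  rw [Pi.add_apply, Pi.add_apply]
  rcases lt_trichotomy M 0 with hM | rfl | hM
  · have hT (a L : ℤ) : refinedTrinomial s a 0 L M = 0 := refinedTrinomial_eq_zero (by omega)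
    have hP (L : ℤ) : refinedTrinomial s a 0 L (M - 1) = 0 := refinedTrinomial_eq_zero (by omega)
    simp only [hT, hP, mul_zero, sub_zero, add_zero]
  · rw [refinedTrinomial_zero_zero_right (by omega),
      refinedTrinomial_eq_zero (M := 0 - 1) (by omega),
      refinedTrinomial_eq_zero (M := 0 - 1) (by omega)]
    simp only [mul_zero, zpow_zero]
    ring
  · have hα := preTrinomial_eq_add_left (s := s) (α := M) (by omega) M M L a
    have hβ := preTrinomial_eq_add_right (s := s) (β := M) (a := a) (by omega) M (M - 1) L
    have hX := preTrinomial_eq_add_left (s := s) (α := M) (by omega) M M (L - 1) (a - 1)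
    have hm := preTrinomial_eq_add_M hs (M := M) (by omega) (M - 1) (M - 1) L a
    rw [sub_sub L, one_add_one_eq_two, sub_add_cancel] at hX
    have e : s ^ (2 * M) * s ^ (2 * M) = s ^ (4 * M) * s ^ (0 : ℤ) :=
      zpow_mul_zpow_congr hs (by ring)
    rw [zpow_zero] at e
    simp only [refinedTrinomial, add_zero, sub_zero]
    linear_combination hα + hβ - s ^ (2 * M) * hX + hm - preTrinomial s M M M (L - 2) a * e

lemma refinedTrinomial_second_difference (hs : s ≠ 0) {a b : ℤ} (ha : 0 < a) (hb : 1 ≤ b)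
    (L M : ℤ) :
    refinedTrinomial s a b L M - (1 + s ^ 2) * refinedTrinomial s a b L (M - 1) +
        s ^ 2 * refinedTrinomial s a b L (M - 2) =
      (1 + s ^ 2) * s ^ (2 * (M + b) - 2) *
        (refinedTrinomial s (a + 1) b (L - 1) M - refinedTrinomial s (a + 1) b (L - 1) (M - 1)) -
      s ^ (4 * (M + b) - 2) * refinedTrinomial s (a + 2) b (L - 2) M +
      s ^ (2 * (M - b)) * (refinedTrinomial s (a - 1) (b - 1) (L - 1) (M - 1) -
        refinedTrinomial s (a - 1) (b - 1) (L - 1) (M - 2)) +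
      s ^ (4 * M - 2 * b - 1) * refinedTrinomial s (a - 1) (b - 1) (L - 2) (M - 1) := by
  rcases lt_or_ge M b with hM | hM
  · have h₀ (a L : ℤ) : refinedTrinomial s a b L M = 0 := refinedTrinomial_eq_zero (by omega)
    have h₁ (a L : ℤ) : refinedTrinomial s a b L (M - 1) = 0 :=
      refinedTrinomial_eq_zero (by omega)
    have h₂ (a L : ℤ) : refinedTrinomial s a b L (M - 2) = 0 :=
      refinedTrinomial_eq_zero (by omega)
    have h₃ (a L : ℤ) : refinedTrinomial s a (b - 1) L (M - 1) = 0 :=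
      refinedTrinomial_eq_zero (by omega)
    have h₄ (a L : ℤ) : refinedTrinomial s a (b - 1) L (M - 2) = 0 :=
      refinedTrinomial_eq_zero (by omega)
    simp only [h₀, h₁, h₂, h₃, h₄, mul_zero, sub_zero, add_zero]
  have h := preTrinomial_second_difference hs (M := M) (α := M + b) (β := M - b) (by ring)
    (by omega) (by omega) ha L
  have e : s ^ (2 * M - 1) * s ^ (2 * (M - b)) = s ^ (4 * M - 2 * b - 1) * s ^ (0 : ℤ) :=
    zpow_mul_zpow_congr hs (by ring)
  rw [zpow_zero, mul_one] at e
  simp only [refinedTrinomial]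
  rwa [← e, sub_add_eq_add_sub M 1, sub_add_eq_add_sub M 2, sub_right_comm M 1, sub_right_comm M 2,
    show M - 1 + (b - 1) = M + b - 2 by ring, show M - 2 + (b - 1) = M + b - 3 by ring,
    show M - 1 - (b - 1) = M - b by ring, show M - 2 - (b - 1) = M - b - 1 by ring]

end RefinedTrinomial

/-! ### The Bailey-type step and its invariance property -/

section BaileyStep

/-- The sum of `f` against the weights `[L + M - i choose L]`, as a function of `M`. -/
noncomputable def weightedSum (s : K) (L : ℤ) (f : ℤ → K) (M : ℤ) : K :=
  ∑ᶠ i, f i * gaussBinom (s ^ 2) (L + M - i) L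

lemma weightedSum_comp_sub_one (L : ℤ) (f : ℤ → K) (M : ℤ) :
    weightedSum s L (fun i ↦ f (i - 1)) M = weightedSum s L f (M - 1) := by
  rw [weightedSum, weightedSum,
    ← finsum_comp_sub_right (fun i ↦ f i * gaussBinom (s ^ 2) (L + (M - 1) - i) L) 1]
  simp only [← add_sub_assoc, sub_sub_sub_cancel_right]

lemma weightedSum_eq_add (hs : s ≠ 0) {L M : ℤ} {f : ℤ → K} (hf : Function.HasFiniteSupport f)
    (h : L ≠ 0 ∨ f M = 0) :
    weightedSum s L (fun i ↦ s ^ (2 * i) * f i) M =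
      weightedSum s L (fun i ↦ s ^ (2 * i) * f i) (M - 1) +
        s ^ (2 * M) * weightedSum s (L - 1) f M := by
  refine finsum_eq_finsum_add_mul _ (by fun_prop) (by fun_prop) fun i ↦ ?_
  by_cases hi : L = 0 ∧ i = M
  · obtain ⟨rfl, rfl⟩ := hi
    simp only [h.resolve_left (not_not_intro rfl), mul_zero, zero_mul, add_zero]
  have e : s ^ (2 * i) * s ^ (2 * (L + M - i - L)) = s ^ (2 * M) * s ^ (0 : ℤ) :=
    zpow_mul_zpow_congr hs (by ring)
  rw [zpow_zero] at e
  rw [gaussBinom_pascal' (pow_ne_zero 2 hs) (N := L + M - i) (by omega), sq_zpow,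
    show L + (M - 1) - i = L + M - i - 1 by ring, show L - 1 + M - i = L + M - i - 1 by ring]
  linear_combination f i * gaussBinom (s ^ 2) (L + M - i - 1) (L - 1) * e

/-- The summand of `baileyStep` without its Gaussian weight. -/
def baileyTerm (s : K) (F : ℤ → ℤ → K) (L i : ℤ) : K :=
  s ^ (i ^ 2) * F (L - i) i

/-- The Bailey-type summation
`(F L M) ↦ ∑ i, q ^ (i ^ 2 / 2) * [L + M - i choose L] * F (L - i) i`. One application raises the
rank of the Cartan matrix on the fermionic side by one. -/
noncomputable def baileyStep (s : K) (F : ℤ → ℤ → K) (L M : ℤ) : K :=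
  weightedSum s L (baileyTerm s F L) M

variable {F G H P : ℤ → ℤ → K}

lemma baileyStep_eq_finsum (F : ℤ → ℤ → K) (L M : ℤ) :
    baileyStep s F L M =
      ∑ᶠ i, s ^ (i ^ 2) * gaussBinom (s ^ 2) (L + M - i) L * F (L - i) i :=
  finsum_congr fun _ ↦ mul_right_comm _ _ _

lemma baileyTerm_ne_zero (hF : QuadrantSupported F) {L i : ℤ} (h : baileyTerm s F L i ≠ 0) :
    0 ≤ i ∧ i ≤ L := by
  have := hF (right_ne_zero_of_mul h)
  omega

lemma baileyTerm_eq_zero (hF : QuadrantSupported F) {L : ℤ} (hL : L < 0) (i : ℤ) :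
    baileyTerm s F L i = 0 := by
  by_contra h
  have := baileyTerm_ne_zero hF h
  omega

lemma hasFiniteSupport_baileyTerm (hF : QuadrantSupported F) (L : ℤ) :
    Function.HasFiniteSupport (baileyTerm s F L) :=
  hasFiniteSupport_of_bounded 0 L fun _ ↦ baileyTerm_ne_zero hF

lemma quadrantSupported_baileyStep (hF : QuadrantSupported F) :
    QuadrantSupported (baileyStep s F) := by
  intro L M h
  by_contra hLM
  refine h (finsum_eq_zero_of_forall_eq_zero fun i ↦ ?_)
  by_contra hi
  have h₁ := baileyTerm_ne_zero hF (left_ne_zero_of_mul hi)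
  have h₂ := bounds_of_gaussBinom_ne_zero (right_ne_zero_of_mul hi)
  omega

lemma IsTrinomialRec.baileyTerm_eq (hs : s ≠ 0) {c d : K} (h : IsTrinomialRec s c d F G H P)
    {L : ℤ} (hL : L ≠ 0) (i : ℤ) :
    baileyTerm s F L i = c * (s ^ (2 * i) * baileyTerm s G (L - 1) i) +
      -d * (s ^ (2 * i) * (s ^ (2 * i) * baileyTerm s H (L - 2) i)) +
      s * (s ^ (2 * (i - 1)) * baileyTerm s P (L - 1) (i - 1)) +
      s ^ 2 * (s ^ (2 * (i - 1)) * (s ^ (2 * (i - 1)) * baileyTerm s P (L - 2) (i - 1))) := by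
  have eH : s ^ (2 * i) * s ^ (2 * i) = s ^ (4 * i) * s ^ (0 : ℤ) :=
    zpow_mul_zpow_congr hs (by ring)
  have eP : s ^ (1 + 2 * (i - 1)) * s ^ ((i - 1) ^ 2) = s ^ (i ^ 2) * s ^ (0 : ℤ) :=
    zpow_mul_zpow_congr hs (by ring)
  have eP' : s ^ (1 + 2 * (i - 1)) = s ^ (2 * i - 1) := congrArg (s ^ ·) (by ring)
  rw [zpow_zero] at eH eP
  have eS := zpow_one_add₀ hs (2 * (i - 1))
  simp only [baileyTerm]
  rw [h (by omega), show L - i - 1 = L - 1 - i by ring, show L - i - 2 = L - 2 - i by ring,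
    show L - 1 - (i - 1) = L - i by ring, show L - 2 - (i - 1) = L - 1 - i by ring, ← eP']
  rw [eS] at eP ⊢
  linear_combination d * s ^ (i ^ 2) * H (L - 2 - i) i * eH - P (L - i) (i - 1) * eP -
    s * s ^ (2 * (i - 1)) * P (L - 1 - i) (i - 1) * eP

lemma IsTrinomialRec.baileyStep_eq (hs : s ≠ 0) {c d : K} (h : IsTrinomialRec s c d F G H P)
    (hG : QuadrantSupported G) (hH : QuadrantSupported H) (hP : QuadrantSupported P)
    {L : ℤ} (hL : L ≠ 0) (M : ℤ) :
    baileyStep s F L M = c * weightedSum s L (fun i ↦ s ^ (2 * i) * baileyTerm s G (L - 1) i) M +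
      -d * weightedSum s L
        (fun i ↦ s ^ (2 * i) * (s ^ (2 * i) * baileyTerm s H (L - 2) i)) M +
      s * weightedSum s L (fun i ↦ s ^ (2 * i) * baileyTerm s P (L - 1) i) (M - 1) +
      s ^ 2 * weightedSum s L
        (fun i ↦ s ^ (2 * i) * (s ^ (2 * i) * baileyTerm s P (L - 2) i)) (M - 1) := by
  have hG' := hasFiniteSupport_baileyTerm (s := s) hG (L - 1)
  have hH' := hasFiniteSupport_baileyTerm (s := s) hH (L - 2)
  have hP₁ := hasFiniteSupport_comp_sub_right (hasFiniteSupport_baileyTerm (s := s) hP (L - 1)) 1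
  have hP₂ := hasFiniteSupport_comp_sub_right (hasFiniteSupport_baileyTerm (s := s) hP (L - 2)) 1
  rw [← weightedSum_comp_sub_one, ← weightedSum_comp_sub_one]
  refine finsum_eq_add_four _ _ _ _ (by fun_prop) (by fun_prop) (by fun_prop) (by fun_prop)
    fun i ↦ ?_
  rw [h.baileyTerm_eq hs hL]
  ring

/-- The second-order recurrence in `M` that characterizes `F` in terms of functions with smaller
`L`. It is inherited by the Bailey-type step from `IsTrinomialRec`. -/
def IsSecondOrderRec (s c d : K) (F G H P : ℤ → ℤ → K) : Prop :=
  ∀ ⦃L⦄, 1 ≤ L → ∀ M, F L M - (1 + s ^ 2) * F L (M - 1) + s ^ 2 * F L (M - 2) =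
    c * s ^ (2 * M) * (G (L - 1) M - G (L - 1) (M - 1)) - d * s ^ (4 * M) * H (L - 2) M +
      s ^ (2 * M - 1) * (P (L - 1) (M - 1) - P (L - 1) (M - 2)) +
      s ^ (4 * M - 2) * P (L - 2) (M - 1)

lemma weightedSum_baileyTerm_sub_one (hs : s ≠ 0) (hF : QuadrantSupported F) {L : ℤ} (hL : 1 ≤ L)
    (M : ℤ) :
    weightedSum s (L - 1) (fun i ↦ s ^ (2 * i) * baileyTerm s F (L - 2) i) M =
      weightedSum s (L - 1) (fun i ↦ s ^ (2 * i) * baileyTerm s F (L - 2) i) (M - 1) +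
        s ^ (2 * M) * baileyStep s F (L - 2) M := by
  rw [weightedSum_eq_add hs (hasFiniteSupport_baileyTerm hF _), sub_sub, one_add_one_eq_two,
    baileyStep]
  rcases eq_or_ne L 1 with rfl | hL
  · exact .inr (baileyTerm_eq_zero hF (by norm_num) M)
  · exact .inl (by omega)

lemma IsTrinomialRec.baileyStep_sub (hs : s ≠ 0) {c d : K} (h : IsTrinomialRec s c d F G H P)
    (hG : QuadrantSupported G) (hH : QuadrantSupported H) (hP : QuadrantSupported P)
    {L : ℤ} (hL : L ≠ 0) (M : ℤ) :
    baileyStep s F L M - baileyStep s F L (M - 1) =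
      c * (s ^ (2 * M) * baileyStep s G (L - 1) M) -
      d * (s ^ (2 * M) *
        weightedSum s (L - 1) (fun i ↦ s ^ (2 * i) * baileyTerm s H (L - 2) i) M) +
      s * (s ^ (2 * (M - 1)) * baileyStep s P (L - 1) (M - 1)) +
      s ^ 2 * (s ^ (2 * (M - 1)) *
        weightedSum s (L - 1) (fun i ↦ s ^ (2 * i) * baileyTerm s P (L - 2) i) (M - 1)) := by
  have hG₁ := hasFiniteSupport_baileyTerm (s := s) hG (L - 1)
  have hH' := hasFiniteSupport_baileyTerm (s := s) hH (L - 2)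
  have hH₂ : Function.HasFiniteSupport fun i ↦ s ^ (2 * i) * baileyTerm s H (L - 2) i := by
    fun_prop
  have hP₁ := hasFiniteSupport_baileyTerm (s := s) hP (L - 1)
  have hP' := hasFiniteSupport_baileyTerm (s := s) hP (L - 2)
  have hP₂ : Function.HasFiniteSupport fun i ↦ s ^ (2 * i) * baileyTerm s P (L - 2) i := by
    fun_prop
  rw [h.baileyStep_eq hs hG hH hP hL M, h.baileyStep_eq hs hG hH hP hL (M - 1),
    baileyStep, baileyStep]
  linear_combination c * weightedSum_eq_add hs (M := M) hG₁ (.inl hL) -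
    d * weightedSum_eq_add hs (M := M) hH₂ (.inl hL) +
    s * weightedSum_eq_add hs (M := M - 1) hP₁ (.inl hL) +
    s ^ 2 * weightedSum_eq_add hs (M := M - 1) hP₂ (.inl hL)

lemma IsTrinomialRec.isSecondOrderRec_baileyStep (hs : s ≠ 0) {c d : K}
    (h : IsTrinomialRec s c d F G H P) (hG : QuadrantSupported G) (hH : QuadrantSupported H)
    (hP : QuadrantSupported P) :
    IsSecondOrderRec s c d (baileyStep s F) (baileyStep s G) (baileyStep s H)
      (baileyStep s P) := by
  intro L hL M
  have h₁ := h.baileyStep_sub hs hG hH hP (L := L) (by omega) M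
  have h₂ := h.baileyStep_sub hs hG hH hP (L := L) (by omega) (M - 1)
  have hH₂ := weightedSum_baileyTerm_sub_one hs hH hL M
  have hP₂ := weightedSum_baileyTerm_sub_one hs hP hL (M - 1)
  rw [sub_sub M, one_add_one_eq_two] at h₂ hP₂
  have e₁ := sq_mul_zpow_congr hs (show 2 * (M - 1) + 2 = 2 * M by ring)
  have e₂ := sq_mul_zpow_congr hs (show 2 * (M - 2) + 2 = 2 * (M - 1) by ring)
  have e₃ : s ^ (4 * M) = s ^ (2 * M) * s ^ (2 * M) := by
    rw [← zpow_add₀ hs]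
    congr 1
    ring
  have e₄ : s ^ (4 * M - 2) = s ^ (2 * M) * s ^ (2 * (M - 1)) := by
    rw [← zpow_add₀ hs]
    congr 1
    ring
  have e₅ : s ^ (2 * M - 1) = s * s ^ (2 * (M - 1)) := by
    rw [← zpow_one_add₀ hs]
    congr 1
    ring
  rw [e₃, e₄, e₅]
  linear_combination h₁ - s ^ 2 * h₂ - d * s ^ (2 * M) * hH₂ + s ^ 2 * s ^ (2 * (M - 1)) * hP₂ +
    (d * weightedSum s (L - 1) (fun i ↦ s ^ (2 * i) * baileyTerm s H (L - 2) i) (M - 1) -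
      c * baileyStep s G (L - 1) (M - 1) +
      s ^ (2 * (M - 1)) * baileyStep s P (L - 2) (M - 1)) * e₁ -
    (s * baileyStep s P (L - 1) (M - 2) + s ^ 2 *
      weightedSum s (L - 1) (fun i ↦ s ^ (2 * i) * baileyTerm s P (L - 2) i) (M - 2)) * e₂

section ShiftedTrinomial

/-- The image of `refinedTrinomial s a b` under `baileyStep`: the first lower entry moves to
`a + b` at the cost of a power of `q`. -/
noncomputable def shiftedTrinomial (s : K) (a b L M : ℤ) : K :=
  s ^ (b ^ 2) * refinedTrinomial s (a + b) b L M

lemma isSecondOrderRec_shiftedTrinomial (hs : s ≠ 0) {a b : ℤ} (ha : 0 ≤ a) (hb : 1 ≤ b) :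
    IsSecondOrderRec s ((1 + s ^ 2) * s ^ (2 * b - 2)) (s ^ (4 * b - 2)) (shiftedTrinomial s a b)
      (shiftedTrinomial s (a + 1) b) (shiftedTrinomial s (a + 2) b)
      (shiftedTrinomial s a (b - 1)) := by
  intro L _ M
  have h := refinedTrinomial_second_difference hs (a := a + b) (by omega) hb L M
  have e₁ : s ^ (2 * b - 2) * s ^ (2 * M) = s ^ (2 * (M + b) - 2) * s ^ (0 : ℤ) :=
    zpow_mul_zpow_congr hs (by ring)
  have e₂ : s ^ (4 * b - 2) * s ^ (4 * M) = s ^ (4 * (M + b) - 2) * s ^ (0 : ℤ) :=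
    zpow_mul_zpow_congr hs (by ring)
  have e₃ : s ^ (2 * M - 1) * s ^ ((b - 1) ^ 2) = s ^ (b ^ 2) * s ^ (2 * (M - b)) :=
    zpow_mul_zpow_congr hs (by ring)
  have e₄ : s ^ (4 * M - 2) * s ^ ((b - 1) ^ 2) = s ^ (b ^ 2) * s ^ (4 * M - 2 * b - 1) :=
    zpow_mul_zpow_congr hs (by ring)
  rw [zpow_zero, mul_one] at e₁ e₂
  simp only [shiftedTrinomial]
  rw [add_right_comm a 1, add_right_comm a 2, ← add_sub_assoc]
  linear_combination s ^ (b ^ 2) * h - (1 + s ^ 2) * s ^ (b ^ 2) *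
      (refinedTrinomial s (a + b + 1) b (L - 1) M -
        refinedTrinomial s (a + b + 1) b (L - 1) (M - 1)) * e₁ +
    s ^ (b ^ 2) * refinedTrinomial s (a + b + 2) b (L - 2) M * e₂ -
    (refinedTrinomial s (a + b - 1) (b - 1) (L - 1) (M - 1) -
      refinedTrinomial s (a + b - 1) (b - 1) (L - 1) (M - 2)) * e₃ -
    refinedTrinomial s (a + b - 1) (b - 1) (L - 2) (M - 1) * e₄

lemma IsTrinomialRec.isSecondOrderRec (hs : s ≠ 0) {c : K} (h : IsTrinomialRec s c 1 F G F F) :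
    IsSecondOrderRec s c 1 F G F F := by
  intro L hL M
  have h₁ := h (L := L) (M := M - 1) (by omega)
  have e₁ := sq_mul_zpow_congr hs (show 2 * (M - 1) + 2 = 2 * M by ring)
  have e₂ := sq_mul_zpow_congr hs (show 4 * (M - 1) + 2 = 4 * M - 2 by ring)
  have e₃ := sq_mul_zpow_congr hs (show 2 * (M - 1) - 1 + 2 = 2 * M - 1 by ring)
  rw [sub_sub M, one_add_one_eq_two] at h₁
  linear_combination h (L := L) (M := M) (by omega) - s ^ 2 * h₁ -
    c * G (L - 1) (M - 1) * e₁ + F (L - 2) (M - 1) * e₂ - F (L - 1) (M - 2) * e₃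

lemma eq_zero_of_second_difference_eq_zero {f : ℤ → K} (h₀ : ∀ M < 0, f M = 0)
    (h : ∀ M, f M - (1 + s ^ 2) * f (M - 1) + s ^ 2 * f (M - 2) = 0) (M : ℤ) : f M = 0 := by
  induction M using Int.strongRec (m := 0) with
  | lt M hM => exact h₀ M hM
  | ge M _ ih =>
    linear_combination h M + (1 + s ^ 2) * ih (M - 1) (by omega) - s ^ 2 * ih (M - 2) (by omega)

lemma IsSecondOrderRec.unique {c d : K} {F' G' H' P' : ℤ → ℤ → K}
    (h : IsSecondOrderRec s c d F G H P) (h' : IsSecondOrderRec s c d F' G' H' P')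
    (hF : QuadrantSupported F) (hF' : QuadrantSupported F') {L : ℤ} (hL : 1 ≤ L)
    (hG : G (L - 1) = G' (L - 1)) (hH : H (L - 2) = H' (L - 2)) (hP₁ : P (L - 1) = P' (L - 1))
    (hP₂ : P (L - 2) = P' (L - 2)) : F L = F' L := by
  funext M
  refine sub_eq_zero.mp (eq_zero_of_second_difference_eq_zero (s := s) (f := F L - F' L)
    (fun M hM ↦ ?_) (fun M ↦ ?_) M)
  · rw [Pi.sub_apply, hF.eq_zero (.inr hM), hF'.eq_zero (.inr hM), sub_zero]
  · have hM := h hL M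
    rw [hG, hH, hP₁, hP₂] at hM
    simp only [Pi.sub_apply]
    linear_combination hM - h' hL M

lemma baileyStep_zero_left (hF : QuadrantSupported F) {M : ℤ} (hM : 0 ≤ M) :
    baileyStep s F 0 M = F 0 0 := by
  rw [baileyStep, weightedSum, finsum_eq_single _ 0 fun i hi ↦ ?_]
  · rw [baileyTerm, gaussBinom_zero_right (by omega)]
    simp
  · have h : baileyTerm s F 0 i = 0 := by
      by_contra h
      have := baileyTerm_ne_zero hF h
      omega
    rw [h, zero_mul]

lemma baileyStep_add (hF : QuadrantSupported F) (hG : QuadrantSupported G) :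
    baileyStep s (F + G) = baileyStep s F + baileyStep s G := by
  funext L M
  have hF' := hasFiniteSupport_baileyTerm (s := s) hF L
  have hG' := hasFiniteSupport_baileyTerm (s := s) hG L
  simp only [baileyStep, weightedSum, Pi.add_apply]
  rw [← finsum_add_distrib (by fun_prop) (by fun_prop)]
  refine finsum_congr fun i ↦ ?_
  simp only [baileyTerm, Pi.add_apply]
  ring

lemma refinedTrinomial_zero_zero_zero {M : ℤ} (hM : 0 ≤ M) :
    refinedTrinomial s 0 0 0 M = 1 := by
  rw [refinedTrinomial, preTrinomial, finsum_eq_single _ 0 fun Y hY ↦ ?_]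
  · simp [preTrinomialTerm, gaussBinom_zero_right hM, gaussBinom_self hM]
  · by_contra h
    have := bounds_of_preTrinomialTerm_ne_zero h
    omega

lemma quadrantSupported_shiftedTrinomial (a b : ℤ) :
    QuadrantSupported (shiftedTrinomial s a b) := fun _ _ h ↦
  quadrantSupported_refinedTrinomial _ _ (right_ne_zero_of_mul h)

lemma shiftedTrinomial_zero_right (a : ℤ) :
    shiftedTrinomial s a 0 = refinedTrinomial s a 0 := by
  funext L M
  simp [shiftedTrinomial]

lemma baileyStep_refinedTrinomial_of_nonpos {a b L : ℤ} (hL : L ≤ 0) (hab : a + b = 0 → a = 0) :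
    baileyStep s (refinedTrinomial s a b) L = shiftedTrinomial s a b L := by
  have hT := quadrantSupported_refinedTrinomial (s := s) a b
  have hS := quadrantSupported_shiftedTrinomial (s := s) a b
  funext M
  by_cases hLM : L < 0 ∨ M < 0
  · rw [(quadrantSupported_baileyStep hT).eq_zero hLM, hS.eq_zero hLM]
  obtain rfl : L = 0 := by omega
  rw [baileyStep_zero_left hT (by omega), shiftedTrinomial]
  by_cases h : a + b = 0
  · obtain ⟨rfl, rfl⟩ : a = 0 ∧ b = 0 := by omega
    rw [add_zero, refinedTrinomial_zero_zero_zero le_rfl,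
      refinedTrinomial_zero_zero_zero (by omega)]
    simp
  · rw [refinedTrinomial_eq_zero (by omega), refinedTrinomial_eq_zero (by omega), mul_zero]

lemma baileyStep_refinedTrinomial_zero (hs : s ≠ 0) (a : ℤ) :
    baileyStep s (refinedTrinomial s a 0) = refinedTrinomial s a 0 := by
  have hT := quadrantSupported_refinedTrinomial (s := s)
  have hB (a : ℤ) := quadrantSupported_baileyStep (s := s) (hT a 0)
  funext L
  induction L using Int.strongRec (m := 1) generalizing a with
  | lt L hL =>
    rw [baileyStep_refinedTrinomial_of_nonpos (by omega) (by omega), shiftedTrinomial_zero_right]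
  | ge L hL ih =>
    have h := isTrinomialRec_refinedTrinomial_zero hs a
    have h' := h.isSecondOrderRec_baileyStep hs ((hT _ _).add (hT _ _)) (hT _ _) (hT _ _)
    rw [baileyStep_add (hT _ _) (hT _ _)] at h'
    refine h'.unique (h.isSecondOrderRec hs) (hB a) (hT a 0) hL ?_ (ih _ (by omega) a)
      (ih _ (by omega) a) (ih _ (by omega) a)
    rw [Pi.add_apply, Pi.add_apply, ih _ (by omega), ih _ (by omega)]

theorem baileyStep_refinedTrinomial_of_nonneg (hs : s ≠ 0) {a b : ℤ} (ha : 0 ≤ a) (hb : 0 ≤ b) :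
    baileyStep s (refinedTrinomial s a b) = shiftedTrinomial s a b := by
  have hT := quadrantSupported_refinedTrinomial (s := s)
  induction b, hb using Int.leInduction generalizing a with
  | base => rw [baileyStep_refinedTrinomial_zero hs, shiftedTrinomial_zero_right]
  | succ b hb ihb =>
    funext L
    induction L using Int.strongRec (m := 1) generalizing a with
    | lt L hL => exact baileyStep_refinedTrinomial_of_nonpos (by omega) (by omega)
    | ge L hL ih =>
      have hP (L : ℤ) : baileyStep s (refinedTrinomial s a (b + 1 - 1)) L =
          shiftedTrinomial s a (b + 1 - 1) L := by rw [add_sub_cancel_right, ihb ha]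
      exact ((isTrinomialRec_refinedTrinomial hs (by omega) a).isSecondOrderRec_baileyStep hs
        (hT _ _) (hT _ _) (hT _ _)).unique
        (isSecondOrderRec_shiftedTrinomial hs ha (by omega)) (quadrantSupported_baileyStep (hT _ _))
        (quadrantSupported_shiftedTrinomial _ _) hL (ih _ (by omega) (by omega))
        (ih _ (by omega) (by omega)) (hP _) (hP _)

theorem baileyStep_refinedTrinomial (hs : s ≠ 0) {a b : ℤ}
    (hab : 0 ≤ a ∧ 0 ≤ b ∨ a ≤ 0 ∧ b ≤ 0) :
    baileyStep s (refinedTrinomial s a b) = shiftedTrinomial s a b := by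
  rcases hab with ⟨ha, hb⟩ | ⟨ha, hb⟩
  · exact baileyStep_refinedTrinomial_of_nonneg hs ha hb
  · rw [← refinedTrinomial_neg_neg,
      baileyStep_refinedTrinomial_of_nonneg hs (neg_nonneg.mpr ha) (neg_nonneg.mpr hb)]
    funext L M
    rw [shiftedTrinomial, shiftedTrinomial, ← neg_add, refinedTrinomial_neg_neg, neg_sq]

end ShiftedTrinomial

end BaileyStep

/-! ### From refined to ordinary trinomials -/

section GaussTrinomial

variable {q : K}

/-- The summand of `gaussTrinomial`. -/
def gaussTrinomialTerm (q : K) (L A k : ℤ) : K :=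
  q ^ (k * (k + A)) * gaussBinom q L k * gaussBinom q (L - k) (k + A)

/-- The `q`-trinomial coefficient `[L; A]_2`, written with `gaussBinom` and summed over all
integers so that summation indices can be shifted freely. -/
noncomputable def gaussTrinomial (q : K) (L A : ℤ) : K :=
  ∑ᶠ k, gaussTrinomialTerm q L A k

lemma bounds_of_gaussTrinomialTerm_ne_zero {L A k : ℤ} (h : gaussTrinomialTerm q L A k ≠ 0) :
    0 ≤ k ∧ k ≤ L ∧ 0 ≤ k + A ∧ 2 * k + A ≤ L := by
  have h₁ := bounds_of_gaussBinom_ne_zero (right_ne_zero_of_mul h)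
  have h₂ := bounds_of_gaussBinom_ne_zero (right_ne_zero_of_mul (left_ne_zero_of_mul h))
  omega

@[fun_prop]
lemma hasFiniteSupport_gaussTrinomialTerm (L A : ℤ) :
    Function.HasFiniteSupport (gaussTrinomialTerm q L A) :=
  hasFiniteSupport_of_bounded 0 L fun k hk ↦ by
    have := bounds_of_gaussTrinomialTerm_ne_zero hk
    omega

lemma gaussTrinomial_eq_zero {L A : ℤ} (h : L < 0 ∨ L < A ∨ L < -A) :
    gaussTrinomial q L A = 0 := by
  refine finsum_eq_zero_of_forall_eq_zero fun k ↦ ?_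
  by_contra hk
  have := bounds_of_gaussTrinomialTerm_ne_zero hk
  omega

lemma gaussTrinomial_self {L : ℤ} (hL : 0 ≤ L) : gaussTrinomial q L L = 1 := by
  rw [gaussTrinomial, finsum_eq_single _ 0 fun k hk ↦ ?_]
  · simp [gaussTrinomialTerm, gaussBinom_zero_right hL, gaussBinom_self hL]
  · by_contra h
    have := bounds_of_gaussTrinomialTerm_ne_zero h
    omega

lemma gaussTrinomial_neg (hq : q ≠ 0) (L A : ℤ) :
    gaussTrinomial q L (-A) = gaussTrinomial q L A := by
  rw [gaussTrinomial, ← finsum_comp_sub_right _ (-A)]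
  refine finsum_congr fun k ↦ ?_
  rw [gaussTrinomialTerm, gaussTrinomialTerm, sub_neg_eq_add, add_neg_cancel_right, mul_assoc,
    mul_assoc, gaussBinom_mul_gaussBinom_comm hq L (k + A) k, mul_comm (k + A) k]

lemma gaussTrinomialTerm_eq_add (hq : q ≠ 0) {L : ℤ} (hL : L ≠ 0) (A k : ℤ) :
    gaussTrinomialTerm q L A k = 1 * gaussTrinomialTerm q (L - 1) A k +
      q ^ (L + A) * gaussTrinomialTerm q (L - 1) (A + 1) (k - 1) +
      q ^ (L - A) * gaussTrinomialTerm q (L - 1) (A - 1) k +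
      (q ^ (L - 1) - q ^ (2 * L - 2)) * gaussTrinomialTerm q (L - 2) A (k - 1) := by
  simp only [gaussTrinomialTerm]
  rw [show k - 1 + (A + 1) = k + A by ring, show L - 1 - (k - 1) = L - k by ring,
    show k + (A - 1) = k + A - 1 by ring, show k - 1 + A = k + A - 1 by ring,
    show L - 2 - (k - 1) = L - k - 1 by ring, show L - 1 - k = L - k - 1 by ring]
  have e₁ : q ^ (L + A) * q ^ ((k - 1) * (k + A)) = q ^ (k * (k + A)) * q ^ (L - k) :=
    zpow_mul_zpow_congr hq (by ring)
  have e₂ : q ^ (L - A) * q ^ (k * (k + A - 1)) = q ^ (k * (k + A)) * q ^ (L - A - k) :=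
    zpow_mul_zpow_congr hq (by ring)
  have e₃ : q ^ (L - 1) * q ^ ((k - 1) * (k + A - 1)) =
      q ^ (k * (k + A)) * q ^ (L - k - (k + A)) := zpow_mul_zpow_congr hq (by ring)
  have e₄ : q ^ (L - 1) * q ^ (L - 1) = q ^ (2 * L - 2) * q ^ (0 : ℤ) :=
    zpow_mul_zpow_congr hq (by ring)
  have e₅ : q ^ (L - k - (k + A)) * q ^ k = q ^ (L - A - k) * q ^ (0 : ℤ) :=
    zpow_mul_zpow_congr hq (by ring)
  rw [zpow_zero, mul_one] at e₄ e₅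
  have p₁ := gaussBinom_pascal' hq (N := L) (k := k) (by omega)
  have p₂ : gaussBinom q (L - 1) k * gaussBinom q (L - k) (k + A) = gaussBinom q (L - 1) k *
      (gaussBinom q (L - k - 1) (k + A) +
        q ^ (L - k - (k + A)) * gaussBinom q (L - k - 1) (k + A - 1)) := by
    rcases eq_or_ne L k with rfl | h
    · rw [gaussBinom_eq_zero (N := L - 1) (by omega), zero_mul, zero_mul]
    · rw [gaussBinom_pascal' hq (N := L - k) (by omega)]
  have p₃ := one_sub_zpow_mul_gaussBinom hq (L - 1) k
  rw [sub_sub L 1 1, one_add_one_eq_two] at p₃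
  linear_combination
    q ^ (k * (k + A)) * gaussBinom q (L - k) (k + A) * p₁ + q ^ (k * (k + A)) * p₂ -
    gaussBinom q (L - 1) (k - 1) * gaussBinom q (L - k) (k + A) * e₁ -
    gaussBinom q (L - 1) k * gaussBinom q (L - k - 1) (k + A - 1) *
      (e₂ - q ^ (k * (k + A)) * e₅) -
    gaussBinom q (L - 2) (k - 1) * gaussBinom q (L - k - 1) (k + A - 1) *
      ((1 - q ^ (L - 1)) * e₃ + q ^ ((k - 1) * (k + A - 1)) * e₄) +
    q ^ (k * (k + A)) * q ^ (L - k - (k + A)) * gaussBinom q (L - k - 1) (k + A - 1) * p₃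

lemma gaussTrinomial_eq_add (hq : q ≠ 0) {L : ℤ} (hL : L ≠ 0) (A : ℤ) :
    gaussTrinomial q L A = 1 * gaussTrinomial q (L - 1) A +
      q ^ (L + A) * gaussTrinomial q (L - 1) (A + 1) +
      q ^ (L - A) * gaussTrinomial q (L - 1) (A - 1) +
      (q ^ (L - 1) - q ^ (2 * L - 2)) * gaussTrinomial q (L - 2) A := by
  simp only [gaussTrinomial]
  rw [← finsum_comp_sub_right (gaussTrinomialTerm q (L - 1) (A + 1)) 1,
    ← finsum_comp_sub_right (gaussTrinomialTerm q (L - 2) A) 1]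
  have h₁ := hasFiniteSupport_comp_sub_right
    (hasFiniteSupport_gaussTrinomialTerm (q := q) (L - 1) (A + 1)) 1
  have h₂ := hasFiniteSupport_comp_sub_right
    (hasFiniteSupport_gaussTrinomialTerm (q := q) (L - 2) A) 1
  exact finsum_eq_add_four _ _ _ _ (by fun_prop) h₁ (by fun_prop) h₂
    (gaussTrinomialTerm_eq_add hq hL A)

lemma gaussBinom_eq_three_term (hq : q ≠ 0) {L : ℤ} (hL : 2 ≤ L) (k : ℤ) :
    gaussBinom q L k = (1 + q) * q ^ (L - k - 1) * gaussBinom q (L - 1) (k - 1) -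
      q ^ (2 * (L - k) - 1) * gaussBinom q (L - 2) (k - 2) + gaussBinom q (L - 2) k := by
  have p₁ := gaussBinom_pascal' hq (N := L) (k := k) (by omega)
  have p₂ := gaussBinom_pascal' hq (N := L - 1) (k := k) (by omega)
  have p₃ := gaussBinom_pascal' hq (N := L - 1) (k := k - 1) (by omega)
  rw [sub_sub L 1 1, one_add_one_eq_two, show L - 1 - k = L - k - 1 by ring] at p₂
  rw [sub_sub L 1 1, one_add_one_eq_two, show k - 1 - 1 = k - 2 by ring,
    show L - 1 - (k - 1) = L - k by ring] at p₃
  have e₁ : q ^ (L - k - 1) * q ^ (L - k) = q ^ (2 * (L - k) - 1) * q ^ (0 : ℤ) :=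
    zpow_mul_zpow_congr hq (by ring)
  have e₂ : q ^ (L - k - 1) * q ^ (1 : ℤ) = q ^ (L - k) * q ^ (0 : ℤ) :=
    zpow_mul_zpow_congr hq (by ring)
  rw [zpow_zero, mul_one] at e₁ e₂
  rw [zpow_one] at e₂
  linear_combination p₁ + p₂ - q ^ (L - k - 1) * p₃ - gaussBinom q (L - 1) (k - 1) * e₂ -
    gaussBinom q (L - 2) (k - 2) * e₁

lemma gaussBinom_sub_two_mul (hq : q ≠ 0) (L k y : ℤ) :
    gaussBinom q (L - 2) k * gaussBinom q (L - k) y =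
      gaussBinom q (L - 2) k * (gaussBinom q (L - k - 1) (y - 1) +
        q ^ y * gaussBinom q (L - k - 2) y +
        q ^ (L - k - 1) * gaussBinom q (L - k - 2) (y - 1)) := by
  by_cases h : L - k < 2
  · rw [gaussBinom_eq_zero (N := L - 2) (by omega), zero_mul, zero_mul]
  have e : q ^ y * q ^ (L - k - 1 - y) = q ^ (L - k - 1) * q ^ (0 : ℤ) :=
    zpow_mul_zpow_congr hq (by ring)
  rw [zpow_zero, mul_one] at e
  rw [gaussBinom_pascal (N := L - k) (by omega),
    gaussBinom_pascal' hq (N := L - k - 1) (k := y) (by omega), sub_sub (L - k) 1 1,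
    one_add_one_eq_two]
  linear_combination gaussBinom q (L - 2) k * gaussBinom q (L - k - 2) (y - 1) * e

/-- The function of `k` whose difference is the error made when `gaussBinom_eq_three_term` is
applied to the summands of `gaussTrinomial`. -/
def gaussTrinomialDefect (q : K) (L A k : ℤ) : K :=
  q ^ (k * (k + A - 1)) * gaussBinom q (L - 2) (k - 1) * gaussBinom q (L - k - 1) (k + A - 1)

@[fun_prop]
lemma hasFiniteSupport_gaussTrinomialDefect (L A : ℤ) :
    Function.HasFiniteSupport (gaussTrinomialDefect q L A) :=
  hasFiniteSupport_of_bounded 1 L fun k hk ↦ by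
    have := bounds_of_gaussBinom_ne_zero (right_ne_zero_of_mul (left_ne_zero_of_mul hk))
    omega

lemma gaussTrinomialTerm_sub_defect (hq : q ≠ 0) {L : ℤ} (hL : 2 ≤ L) (A k : ℤ) :
    gaussTrinomialTerm q L A k -
        (gaussTrinomialDefect q L A (k - -1) - gaussTrinomialDefect q L A k) =
      (1 + q) * q ^ (L + A - 1) * gaussTrinomialTerm q (L - 1) (A + 1) (k - 1) +
      -q ^ (2 * L + 2 * A - 1) * gaussTrinomialTerm q (L - 2) (A + 2) (k - 2) +
      1 * gaussTrinomialTerm q (L - 1) (A - 1) k +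
      q ^ (L - 1) * gaussTrinomialTerm q (L - 2) (A - 1) k := by
  simp only [gaussTrinomialTerm, gaussTrinomialDefect]
  rw [show k - 1 + (A + 1) = k + A by ring, show L - 1 - (k - 1) = L - k by ring,
    show k + (A - 1) = k + A - 1 by ring, show k - 2 + (A + 2) = k + A by ring,
    show L - 2 - (k - 2) = L - k by ring, show L - 1 - k = L - k - 1 by ring,
    show L - 2 - k = L - k - 2 by ring, show k - -1 + A - 1 = k + A by ring,
    show k - -1 - 1 = k by ring, show L - (k - -1) - 1 = L - k - 2 by ring,
    show k - -1 = k + 1 by ring]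
  have p₁ := gaussBinom_eq_three_term hq hL k
  have p₂ := gaussBinom_pascal (q := q) (N := L - 1) (k := k) (by omega)
  rw [sub_sub L 1 1, one_add_one_eq_two] at p₂
  have p₃ := gaussBinom_sub_two_mul hq L k (k + A)
  have e₁ : q ^ (L + A - 1) * q ^ ((k - 1) * (k + A)) = q ^ (k * (k + A)) * q ^ (L - k - 1) :=
    zpow_mul_zpow_congr hq (by ring)
  have e₂ : q ^ (2 * L + 2 * A - 1) * q ^ ((k - 2) * (k + A)) =
      q ^ (k * (k + A)) * q ^ (2 * (L - k) - 1) := zpow_mul_zpow_congr hq (by ring)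
  have e₃ : q ^ (k * (k + A - 1)) * q ^ k = q ^ (k * (k + A)) * q ^ (0 : ℤ) :=
    zpow_mul_zpow_congr hq (by ring)
  have e₄ : q ^ (L - 1) * q ^ (k * (k + A - 1)) =
      q ^ (k * (k + A)) * q ^ (L - k - 1) := zpow_mul_zpow_congr hq (by ring)
  have e₅ : q ^ (k * (k + A)) * q ^ (k + A) = q ^ ((k + 1) * (k + A)) * q ^ (0 : ℤ) :=
    zpow_mul_zpow_congr hq (by ring)
  rw [zpow_zero, mul_one] at e₃ e₅
  linear_combination
    q ^ (k * (k + A)) * gaussBinom q (L - k) (k + A) * p₁ + q ^ (k * (k + A)) * p₃ -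
    q ^ (k * (k + A - 1)) * gaussBinom q (L - k - 1) (k + A - 1) * p₂ -
    (1 + q) * gaussBinom q (L - 1) (k - 1) * gaussBinom q (L - k) (k + A) * e₁ +
    gaussBinom q (L - 2) (k - 2) * gaussBinom q (L - k) (k + A) * e₂ -
    gaussBinom q (L - 2) k * gaussBinom q (L - k - 1) (k + A - 1) * e₃ -
    gaussBinom q (L - 2) k * gaussBinom q (L - k - 2) (k + A - 1) * e₄ +
    gaussBinom q (L - 2) k * gaussBinom q (L - k - 2) (k + A) * e₅

lemma gaussTrinomial_eq_three_term (hq : q ≠ 0) {L A : ℤ} (hL : 1 ≤ L) (hA : 1 ≤ A) :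
    gaussTrinomial q L A = (1 + q) * q ^ (L + A - 1) * gaussTrinomial q (L - 1) (A + 1) +
      -q ^ (2 * L + 2 * A - 1) * gaussTrinomial q (L - 2) (A + 2) +
      1 * gaussTrinomial q (L - 1) (A - 1) + q ^ (L - 1) * gaussTrinomial q (L - 2) (A - 1) := by
  rcases hL.eq_or_lt with rfl | hL
  · simp only [gaussTrinomial_eq_zero (q := q) (L := 1 - 2) (.inl (by omega)),
      gaussTrinomial_eq_zero (q := q) (L := 1 - 1) (A := A + 1) (by omega), mul_zero, one_mul,
      zero_add, add_zero]
    rcases hA.eq_or_lt with rfl | hA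
    · rw [gaussTrinomial_self (by norm_num), gaussTrinomial_self (by norm_num)]
    · rw [gaussTrinomial_eq_zero (by omega), gaussTrinomial_eq_zero (by omega)]
  have h₁ := hasFiniteSupport_comp_sub_right
    (hasFiniteSupport_gaussTrinomialTerm (q := q) (L - 1) (A + 1)) 1
  have h₂ := hasFiniteSupport_comp_sub_right
    (hasFiniteSupport_gaussTrinomialTerm (q := q) (L - 2) (A + 2)) 2
  have hD := hasFiniteSupport_comp_sub_right
    (hasFiniteSupport_gaussTrinomialDefect (q := q) L A) (-1)
  have htel : gaussTrinomial q L A = ∑ᶠ k, (gaussTrinomialTerm q L A k -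
      (gaussTrinomialDefect q L A (k - -1) - gaussTrinomialDefect q L A k)) := by
    rw [finsum_sub_distrib (by fun_prop) (by fun_prop), finsum_sub_distrib hD (by fun_prop),
      finsum_comp_sub_right (gaussTrinomialDefect q L A), sub_self, sub_zero, gaussTrinomial]
  rw [htel]
  simp only [gaussTrinomial]
  rw [← finsum_comp_sub_right (gaussTrinomialTerm q (L - 1) (A + 1)) 1,
    ← finsum_comp_sub_right (gaussTrinomialTerm q (L - 2) (A + 2)) 2]
  exact finsum_eq_add_four _ _ _ _ h₁ h₂ (by fun_prop) (by fun_prop)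
    (gaussTrinomialTerm_sub_defect hq hL A)

end GaussTrinomial

section DiagSum

/-- The diagonal summation `(F L M) ↦ ∑ i, q ^ ((L - i) ^ 2 / 2) * F (L - i) i`, which peels off
the first row of the Cartan matrix, the one carrying `L`. -/
noncomputable def diagSum (s : K) (F : ℤ → ℤ → K) (L : ℤ) : K :=
  ∑ᶠ i, s ^ ((L - i) ^ 2) * F (L - i) i

variable {F G H P : ℤ → ℤ → K}

lemma hasFiniteSupport_diagSum (hF : QuadrantSupported F) (L : ℤ) :
    Function.HasFiniteSupport fun i ↦ s ^ ((L - i) ^ 2) * F (L - i) i :=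
  hasFiniteSupport_of_bounded 0 L fun i hi ↦ by
    have := hF (right_ne_zero_of_mul hi)
    omega

lemma diagSum_of_neg (hF : QuadrantSupported F) {L : ℤ} (hL : L < 0) : diagSum s F L = 0 :=
  finsum_eq_zero_of_forall_eq_zero fun i ↦ by rw [hF.eq_zero (by omega), mul_zero]

lemma diagSum_zero (hF : QuadrantSupported F) : diagSum s F 0 = F 0 0 := by
  rw [diagSum, finsum_eq_single _ 0 fun i hi ↦ ?_]
  · simp
  · rw [hF.eq_zero (by omega), mul_zero]

lemma diagSum_add (hF : QuadrantSupported F) (hG : QuadrantSupported G) (L : ℤ) :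
    diagSum s (F + G) L = diagSum s F L + diagSum s G L := by
  simp only [diagSum, Pi.add_apply, mul_add]
  exact finsum_add_distrib (hasFiniteSupport_diagSum hF L) (hasFiniteSupport_diagSum hG L)

lemma IsTrinomialRec.diagSum_eq (hs : s ≠ 0) {c d : K} (h : IsTrinomialRec s c d F G H P)
    (hG : QuadrantSupported G) (hH : QuadrantSupported H) (hP : QuadrantSupported P)
    {L : ℤ} (hL : L ≠ 0) :
    diagSum s F L = c * s ^ (2 * L - 1) * diagSum s G (L - 1) +
      -d * s ^ (4 * L - 4) * diagSum s H (L - 2) + 1 * diagSum s P (L - 1) +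
      s ^ (2 * L - 2) * diagSum s P (L - 2) := by
  simp only [diagSum]
  rw [← finsum_comp_sub_right (fun i ↦ s ^ ((L - 1 - i) ^ 2) * P (L - 1 - i) i) 1,
    ← finsum_comp_sub_right (fun i ↦ s ^ ((L - 2 - i) ^ 2) * P (L - 2 - i) i) 1]
  refine finsum_eq_add_four _ _ _ _ (hasFiniteSupport_diagSum hG _)
    (hasFiniteSupport_diagSum hH _)
    (hasFiniteSupport_comp_sub_right (hasFiniteSupport_diagSum hP _) 1)
    (hasFiniteSupport_comp_sub_right (hasFiniteSupport_diagSum hP _) 1) fun i ↦ ?_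
  have e₁ : s ^ (2 * L - 1) * s ^ ((L - 1 - i) ^ 2) = s ^ ((L - i) ^ 2) * s ^ (2 * i) :=
    zpow_mul_zpow_congr hs (by ring)
  have e₂ : s ^ (4 * L - 4) * s ^ ((L - 2 - i) ^ 2) = s ^ ((L - i) ^ 2) * s ^ (4 * i) :=
    zpow_mul_zpow_congr hs (by ring)
  have e₃ : s ^ (2 * L - 2) * s ^ ((L - 1 - i) ^ 2) = s ^ ((L - i) ^ 2) * s ^ (2 * i - 1) :=
    zpow_mul_zpow_congr hs (by ring)
  rw [h (by omega), show L - i - 1 = L - 1 - i by ring, show L - i - 2 = L - 2 - i by ring,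
    show L - 1 - (i - 1) = L - i by ring, show L - 2 - (i - 1) = L - 1 - i by ring]
  linear_combination -c * G (L - 1 - i) i * e₁ + d * H (L - 2 - i) i * e₂ -
    P (L - 1 - i) (i - 1) * e₃

lemma diagSum_refinedTrinomial_of_nonpos {a b L : ℤ} (hL : L ≤ 0) (hab : a + b = 0 → a = 0) :
    diagSum s (refinedTrinomial s a b) L = s ^ (a ^ 2) * gaussTrinomial (s ^ 2) L (a + b) := by
  have hT := quadrantSupported_refinedTrinomial (s := s) a b
  rcases hL.lt_or_eq with hL | rfl
  · rw [diagSum_of_neg hT hL, gaussTrinomial_eq_zero (.inl hL), mul_zero]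
  rw [diagSum_zero hT]
  by_cases h : a + b = 0
  · obtain ⟨rfl, rfl⟩ : a = 0 ∧ b = 0 := by omega
    rw [add_zero, refinedTrinomial_zero_zero_zero le_rfl, gaussTrinomial_self le_rfl]
    simp
  · rw [gaussTrinomial_eq_zero (by omega), mul_zero, refinedTrinomial_eq_zero (by omega)]

lemma diagSum_refinedTrinomial_zero (hs : s ≠ 0) (a L : ℤ) :
    diagSum s (refinedTrinomial s a 0) L = s ^ (a ^ 2) * gaussTrinomial (s ^ 2) L a := by
  have hT (a : ℤ) := quadrantSupported_refinedTrinomial (s := s) a 0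
  induction L using Int.strongRec (m := 1) generalizing a with
  | lt L hL => rw [diagSum_refinedTrinomial_of_nonpos (by omega) (by omega), add_zero]
  | ge L hL ih =>
    rw [(isTrinomialRec_refinedTrinomial_zero hs a).diagSum_eq hs ((hT _).add (hT _)) (hT _) (hT _)
      (by omega), diagSum_add (hT _) (hT _), ih _ (by omega), ih _ (by omega), ih _ (by omega),
      ih _ (by omega), gaussTrinomial_eq_add (pow_ne_zero 2 hs) (L := L) (by omega) a]
    simp only [sq_zpow]
    have e₁ : s ^ (2 * L - 1) * s ^ ((a + 1) ^ 2) = s ^ (a ^ 2) * s ^ (2 * (L + a)) :=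
      zpow_mul_zpow_congr hs (by ring)
    have e₂ : s ^ (2 * L - 1) * s ^ ((a - 1) ^ 2) = s ^ (a ^ 2) * s ^ (2 * (L - a)) :=
      zpow_mul_zpow_congr hs (by ring)
    rw [show 2 * (2 * L - 2) = 4 * L - 4 by ring, show 2 * (L - 1) = 2 * L - 2 by ring]
    linear_combination gaussTrinomial (s ^ 2) (L - 1) (a + 1) * e₁ +
      gaussTrinomial (s ^ 2) (L - 1) (a - 1) * e₂

theorem diagSum_refinedTrinomial_of_nonneg (hs : s ≠ 0) {a b : ℤ} (ha : 0 ≤ a) (hb : 0 ≤ b)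
    (L : ℤ) :
    diagSum s (refinedTrinomial s a b) L = s ^ (a ^ 2) * gaussTrinomial (s ^ 2) L (a + b) := by
  have hT := quadrantSupported_refinedTrinomial (s := s)
  induction b, hb using Int.leInduction generalizing a L with
  | base => rw [diagSum_refinedTrinomial_zero hs, add_zero]
  | succ b hb ihb =>
    induction L using Int.strongRec (m := 1) generalizing a with
    | lt L hL => exact diagSum_refinedTrinomial_of_nonpos (by omega) (by omega)
    | ge L hL ih =>
      rw [(isTrinomialRec_refinedTrinomial hs (by omega) a).diagSum_eq hs (hT _ _) (hT _ _)
        (hT _ _) (by omega), ih _ (by omega) (by omega), ih _ (by omega) (by omega),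
        add_sub_cancel_right, ihb ha, ihb ha,
        gaussTrinomial_eq_three_term (pow_ne_zero 2 hs) hL (by omega)]
      simp only [sq_zpow]
      rw [show a + 1 + (b + 1) = a + (b + 1) + 1 by ring,
        show a + 2 + (b + 1) = a + (b + 1) + 2 by ring, show a + (b + 1) - 1 = a + b by ring]
      have e₁ : s ^ (2 * (b + 1) - 2) * s ^ (2 * L - 1) * s ^ ((a + 1) ^ 2) =
          s ^ (a ^ 2) * s ^ (2 * (L + (a + (b + 1)) - 1)) := by
        rw [← zpow_add₀ hs]
        exact zpow_mul_zpow_congr hs (by ring)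
      have e₂ : s ^ (4 * (b + 1) - 2) * s ^ (4 * L - 4) * s ^ ((a + 2) ^ 2) =
          s ^ (a ^ 2) * s ^ (2 * (2 * L + 2 * (a + (b + 1)) - 1)) := by
        rw [← zpow_add₀ hs]
        exact zpow_mul_zpow_congr hs (by ring)
      rw [show 2 * (L - 1) = 2 * L - 2 by ring]
      linear_combination
        (1 + s ^ 2) * gaussTrinomial (s ^ 2) (L - 1) (a + (b + 1) + 1) * e₁ -
        gaussTrinomial (s ^ 2) (L - 2) (a + (b + 1) + 2) * e₂

theorem diagSum_refinedTrinomial (hs : s ≠ 0) {a b : ℤ} (hab : 0 ≤ a ∧ 0 ≤ b ∨ a ≤ 0 ∧ b ≤ 0)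
    (L : ℤ) :
    diagSum s (refinedTrinomial s a b) L = s ^ (a ^ 2) * gaussTrinomial (s ^ 2) L (a + b) := by
  rcases hab with ⟨ha, hb⟩ | ⟨ha, hb⟩
  · exact diagSum_refinedTrinomial_of_nonneg hs ha hb L
  · rw [← refinedTrinomial_neg_neg a b, diagSum_refinedTrinomial_of_nonneg hs (by omega) (by omega),
      ← neg_add, gaussTrinomial_neg (pow_ne_zero 2 hs), neg_sq]

end DiagSum

/-! ### Alternating sums of refined trinomials -/

section BosonicSum

/-- The summand of `bosonicSum`. -/
noncomputable def bosonicTerm (s : K) (k L M j : ℤ) : K :=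
  s ^ (k * j ^ 2 + 2 * j) *
    (refinedTrinomial s (k * j) j L M - refinedTrinomial s (k * j + 2) j L M)

/-- The alternating sum of refined trinomials with modulus `k`. The Bailey-type step raises the
modulus by one. -/
noncomputable def bosonicSum (s : K) (k L M : ℤ) : K :=
  ∑ᶠ j, bosonicTerm s k L M j

lemma bosonicTerm_ne_zero {k L M j : ℤ} (h : bosonicTerm s k L M j ≠ 0) :
    (0 ≤ L ∧ 0 ≤ M) ∧ -M ≤ j ∧ j ≤ M := by
  by_contra hLM
  refine h ?_
  rw [bosonicTerm, refinedTrinomial_eq_zero (by omega), refinedTrinomial_eq_zero (by omega),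
    sub_zero, mul_zero]

lemma quadrantSupported_bosonicSum (k : ℤ) : QuadrantSupported (bosonicSum s k) := by
  intro L M h
  by_contra hLM
  refine h (finsum_eq_zero_of_forall_eq_zero fun j ↦ ?_)
  by_contra hj
  exact hLM (bosonicTerm_ne_zero hj).1

lemma finsum_mul_bosonicSum (k L : ℤ) (w : ℤ → K) :
    ∑ᶠ i, w i * bosonicSum s k (L - i) i = ∑ᶠ j, s ^ (k * j ^ 2 + 2 * j) *
      (∑ᶠ i, w i * refinedTrinomial s (k * j) j (L - i) i -
        ∑ᶠ i, w i * refinedTrinomial s (k * j + 2) j (L - i) i) := by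
  simp only [bosonicSum, mul_finsum]
  rw [finsum_comm_of_bounded (-L) L fun i j h ↦ ?_]
  · refine finsum_congr fun j ↦ ?_
    have hT (a b : ℤ) := (quadrantSupported_refinedTrinomial (s := s) a b).hasFiniteSupport L
    rw [← finsum_sub_distrib (by fun_prop) (by fun_prop), mul_finsum]
    refine finsum_congr fun i ↦ ?_
    rw [bosonicTerm]
    ring
  · have := bosonicTerm_ne_zero (right_ne_zero_of_mul h)
    omega

lemma same_sign_mul {k : ℤ} (hk : 2 ≤ k) (j : ℤ) : 0 ≤ k * j ∧ 0 ≤ j ∨ k * j ≤ 0 ∧ j ≤ 0 :=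
  (le_total 0 j).imp (fun h ↦ ⟨by positivity, h⟩) fun h ↦ ⟨by nlinarith, h⟩

lemma same_sign_mul_add_two {k : ℤ} (hk : 2 ≤ k) (j : ℤ) :
    0 ≤ k * j + 2 ∧ 0 ≤ j ∨ k * j + 2 ≤ 0 ∧ j ≤ 0 :=
  (le_or_gt 0 j).imp (fun h ↦ ⟨by positivity, h⟩) fun h ↦ ⟨by nlinarith, h.le⟩

theorem baileyStep_bosonicSum (hs : s ≠ 0) {k : ℤ} (hk : 2 ≤ k) :
    baileyStep s (bosonicSum s k) = bosonicSum s (k + 1) := by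
  funext L M
  rw [baileyStep_eq_finsum, finsum_mul_bosonicSum, bosonicSum]
  refine finsum_congr fun j ↦ ?_
  rw [← baileyStep_eq_finsum, ← baileyStep_eq_finsum,
    baileyStep_refinedTrinomial hs (same_sign_mul hk j),
    baileyStep_refinedTrinomial hs (same_sign_mul_add_two hk j), bosonicTerm,
    shiftedTrinomial, shiftedTrinomial, ← mul_sub, ← mul_assoc, ← zpow_add₀ hs,
    show k * j + 2 + j = (k + 1) * j + 2 by ring, show k * j + j = (k + 1) * j by ring,
    show k * j ^ 2 + 2 * j + j ^ 2 = (k + 1) * j ^ 2 + 2 * j by ring]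

theorem diagSum_bosonicSum (hs : s ≠ 0) {k : ℤ} (hk : 2 ≤ k) (L : ℤ) :
    diagSum s (bosonicSum s k) L = ∑ᶠ j,
      (s ^ (j * (k * (k + 1) * j + 2)) * gaussTrinomial (s ^ 2) L ((k + 1) * j) -
        s ^ ((k * j + 2) * ((k + 1) * j + 2)) *
          gaussTrinomial (s ^ 2) L ((k + 1) * j + 2)) := by
  rw [diagSum, finsum_mul_bosonicSum]
  refine finsum_congr fun j ↦ ?_
  rw [← diagSum, ← diagSum, diagSum_refinedTrinomial hs (same_sign_mul hk j),
    diagSum_refinedTrinomial hs (same_sign_mul_add_two hk j), mul_sub, ← mul_assoc, ← mul_assoc,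
    ← zpow_add₀ hs, ← zpow_add₀ hs, show k * j + 2 + j = (k + 1) * j + 2 by ring,
    show k * j + j = (k + 1) * j by ring,
    show k * j ^ 2 + 2 * j + (k * j) ^ 2 = j * (k * (k + 1) * j + 2) by ring,
    show k * j ^ 2 + 2 * j + (k * j + 2) ^ 2 = (k * j + 2) * ((k + 1) * j + 2) by ring]

lemma gaussTrinomial_mul_add_eq_zero {q : K} {L : ℕ} {k c j : ℤ} (hk : 3 ≤ k) (hc₀ : 0 ≤ c)
    (hc₂ : c ≤ 2) (hj : j < -L ∨ L < j) : gaussTrinomial q L (k * j + c) = 0 := by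
  refine gaussTrinomial_eq_zero (.inr (hj.symm.imp (fun h ↦ ?_) fun h ↦ ?_))
  · have : 1 * j ≤ k * j := mul_le_mul_of_nonneg_right (by omega) (by omega)
    omega
  · have : k * j ≤ 3 * j := mul_le_mul_of_nonpos_right hk (by omega)
    omega

theorem diagSum_bosonicSum_natCast (hs : s ≠ 0) {k : ℤ} (hk : 2 ≤ k) (L : ℕ) :
    diagSum s (bosonicSum s k) L = ∑ j ∈ Icc (-(L : ℤ)) L,
      (s ^ (j * (k * (k + 1) * j + 2)) * gaussTrinomial (s ^ 2) L ((k + 1) * j) -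
        s ^ ((k * j + 2) * ((k + 1) * j + 2)) *
          gaussTrinomial (s ^ 2) L ((k + 1) * j + 2)) := by
  rw [diagSum_bosonicSum hs hk]
  refine finsum_eq_sum_of_support_subset _ fun j hj ↦ ?_
  by_contra hmem
  rw [coe_Icc, Set.mem_Icc, not_and_or, not_le, not_le] at hmem
  have hk' : 3 ≤ k + 1 := by omega
  have h₀ := gaussTrinomial_mul_add_eq_zero (q := s ^ 2) hk' le_rfl zero_le_two hmem
  rw [add_zero] at h₀
  refine hj ?_
  dsimp only
  rw [h₀, gaussTrinomial_mul_add_eq_zero hk' zero_le_two le_rfl hmem, mul_zero, mul_zero, sub_zero]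

end BosonicSum

section Seed

lemma refinedTrinomial_two_mul (c b L M : ℤ) :
    refinedTrinomial s (2 * c) b L M = ∑ᶠ X, s ^ ((L - 2 * X) ^ 2) *
      gaussBinom (s ^ 2) M (L - 2 * X) *
        (gaussBinom (s ^ 2) (M + b - c + X) (M + b) *
          gaussBinom (s ^ 2) (M - b + c + X) (M - b)) := by
  rw [refinedTrinomial, preTrinomial, ← finsum_comp_sub_right _ (-c)]
  refine finsum_congr fun X ↦ ?_
  rw [preTrinomialTerm, show L - 2 * (X - -c) + 2 * c = L - 2 * X by ring,
    show M + b + (X - -c) - 2 * c = M + b - c + X by ring,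
    show M - b + (X - -c) = M - b + c + X by ring, mul_assoc]

/-- The coefficient of `s ^ ((L - 2 * X) ^ 2) * [M choose L - 2 * X]` in
`bosonicTerm s 2 L M j`. -/
def seedTerm (s : K) (M X j : ℤ) : K :=
  s ^ (2 * j ^ 2 + 2 * j) *
    (gaussBinom (s ^ 2) (M + X) (M + j) * gaussBinom (s ^ 2) (M + X) (M - j) -
      gaussBinom (s ^ 2) (M + X - 1) (M + j) * gaussBinom (s ^ 2) (M + X + 1) (M - j))

/-- The sequence in `j` whose differences are `seedTerm s M X j`. -/
def seedPrimitive (s : K) (M X j : ℤ) : K :=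
  s ^ (2 * (j ^ 2 + X)) *
    (gaussBinom (s ^ 2) (M + X - 1) (M + j - 1) * gaussBinom (s ^ 2) (M + X) (M - j))

lemma seedTerm_ne_zero {M X j : ℤ} (h : seedTerm s M X j ≠ 0) : -M ≤ j ∧ j ≤ M := by
  by_contra hj
  refine h ?_
  rcases lt_or_ge j (-M) with hM | hM
  · simp only [seedTerm, gaussBinom_eq_zero (k := M + j) (.inl (by omega)), zero_mul, sub_zero,
      mul_zero]
  · simp only [seedTerm, gaussBinom_eq_zero (k := M - j) (.inl (by omega)), mul_zero, sub_zero]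

lemma seedTerm_eq_sub (hs : s ≠ 0) {M X : ℤ} (h : 0 < M + X) (j : ℤ) :
    seedTerm s M X j = seedPrimitive s M X j - seedPrimitive s M X (j - -1) := by
  have e₁ : s ^ (2 * j ^ 2 + 2 * j) * s ^ (2 * (M + X - (M + j))) = s ^ (2 * (j ^ 2 + X)) := by
    rw [← zpow_add₀ hs]
    congr 1
    ring
  have e₂ : s ^ (2 * j ^ 2 + 2 * j) * s ^ (2 * (M + X + 1 - (M - j))) =
      s ^ (2 * ((j - -1) ^ 2 + X)) := by
    rw [← zpow_add₀ hs]
    congr 1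
    ring
  rw [seedTerm, gaussBinom_pascal' (pow_ne_zero 2 hs) (N := M + X) (k := M + j) (by omega),
    gaussBinom_pascal' (pow_ne_zero 2 hs) (N := M + X + 1) (k := M - j) (by omega), sq_zpow,
    sq_zpow, seedPrimitive, seedPrimitive, add_sub_cancel_right,
    show M - (j - -1) = M - j - 1 by ring, show M + (j - -1) - 1 = M + j by ring]
  linear_combination gaussBinom (s ^ 2) (M + X - 1) (M + j - 1) *
      gaussBinom (s ^ 2) (M + X) (M - j) * e₁ -
    gaussBinom (s ^ 2) (M + X - 1) (M + j) * gaussBinom (s ^ 2) (M + X) (M - j - 1) * e₂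

lemma finsum_seedTerm (hs : s ≠ 0) {M : ℤ} (hM : 0 ≤ M) (X : ℤ) :
    ∑ᶠ j, seedTerm s M X j = if M = 0 ∧ X = 0 then 1 else 0 := by
  rcases lt_or_ge 0 (M + X) with h | h
  · have hfin : Function.HasFiniteSupport (seedPrimitive s M X) :=
      hasFiniteSupport_of_bounded (1 - M) M fun j hj ↦ by
        have h₁ := bounds_of_gaussBinom_ne_zero (left_ne_zero_of_mul (right_ne_zero_of_mul hj))
        have h₂ := bounds_of_gaussBinom_ne_zero (right_ne_zero_of_mul (right_ne_zero_of_mul hj))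
        omega
    rw [if_neg (by omega), finsum_congr (seedTerm_eq_sub hs h),
      finsum_sub_distrib hfin (hasFiniteSupport_comp_sub_right hfin _), finsum_comp_sub_right,
      sub_self]
  have hzero (k : ℤ) : gaussBinom (s ^ 2) (M + X - 1) k = 0 := gaussBinom_eq_zero (by omega)
  rw [finsum_eq_single _ 0 fun j hj ↦ ?_]
  · simp only [seedTerm, hzero]
    split_ifs with hMX
    · simp [hMX, gaussBinom_self]
    · rw [gaussBinom_eq_zero (N := M + X) (k := M + 0) (by omega)]
      ring
  · simp only [seedTerm, hzero]
    rcases lt_or_gt_of_ne hj with hj | hj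
    · rw [gaussBinom_eq_zero (N := M + X) (k := M - j) (by omega)]
      ring
    · rw [gaussBinom_eq_zero (N := M + X) (k := M + j) (by omega)]
      ring

lemma bosonicTerm_two (L M j : ℤ) :
    bosonicTerm s 2 L M j =
      ∑ᶠ X, s ^ ((L - 2 * X) ^ 2) * gaussBinom (s ^ 2) M (L - 2 * X) * seedTerm s M X j := by
  have hfin : Function.HasFiniteSupport fun X ↦
      s ^ ((L - 2 * X) ^ 2) * gaussBinom (s ^ 2) M (L - 2 * X) :=
    hasFiniteSupport_of_bounded ((L - M) / 2) (L / 2) fun X hX ↦ by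
      have := bounds_of_gaussBinom_ne_zero (right_ne_zero_of_mul hX)
      omega
  rw [bosonicTerm, show 2 * j + 2 = 2 * (j + 1) by ring, refinedTrinomial_two_mul,
    refinedTrinomial_two_mul, ← finsum_sub_distrib (by fun_prop) (by fun_prop), mul_finsum]
  refine finsum_congr fun X ↦ ?_
  rw [seedTerm, show M + j - j + X = M + X by ring, show M - j + j + X = M + X by ring,
    show M + j - (j + 1) + X = M + X - 1 by ring, show M - j + (j + 1) + X = M + X + 1 by ring]
  ring

theorem bosonicSum_two (hs : s ≠ 0) (L M : ℤ) :
    bosonicSum s 2 L M = if L = 0 ∧ M = 0 then 1 else 0 := by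
  rcases lt_or_ge M 0 with hM | hM
  · rw [(quadrantSupported_bosonicSum 2).eq_zero (.inr hM), if_neg (by omega)]
  simp only [bosonicSum, bosonicTerm_two]
  rw [finsum_comm_of_bounded (min (-M) ((L - M) / 2)) (max M (L / 2)) fun j X h ↦ ?_]
  · simp only [← mul_finsum, finsum_seedTerm hs hM]
    rw [finsum_eq_single _ 0 fun X hX ↦ by rw [if_neg (by omega), mul_zero]]
    split_ifs with h₁ h₂ h₂
    · simp [h₁, h₂, gaussBinom_self]
    · rw [gaussBinom_eq_zero (by omega)]
      ring
    · omega
    · rw [mul_zero]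
  · have hj := seedTerm_ne_zero (right_ne_zero_of_mul h)
    have hX := bounds_of_gaussBinom_ne_zero (right_ne_zero_of_mul (left_ne_zero_of_mul h))
    omega

theorem bosonicSum_three (hs : s ≠ 0) (L M : ℤ) :
    bosonicSum s 3 L M = if L = 0 ∧ 0 ≤ M then 1 else 0 := by
  rw [show (3 : ℤ) = 2 + 1 by norm_num, ← baileyStep_bosonicSum hs le_rfl, baileyStep_eq_finsum,
    finsum_eq_single _ 0 fun i hi ↦ by rw [bosonicSum_two hs, if_neg (by omega), mul_zero],
    bosonicSum_two hs]
  by_cases hL : L = 0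
  · by_cases hM : 0 ≤ M
    · simp [hL, hM, gaussBinom_zero_right]
    · simp [hL, hM, gaussBinom_eq_zero (N := M) (k := 0) (.inr (by omega))]
  · simp [hL]

theorem bosonicSum_four (hs : s ≠ 0) (L M : ℤ) :
    bosonicSum s 4 L M = s ^ (L ^ 2) * gaussBinom (s ^ 2) M L := by
  rw [show (4 : ℤ) = 3 + 1 by norm_num, ← baileyStep_bosonicSum hs (by norm_num),
    baileyStep_eq_finsum,
    finsum_eq_single _ L fun i hi ↦ by rw [bosonicSum_three hs, if_neg (by omega), mul_zero],
    bosonicSum_three hs, sub_self, add_sub_cancel_left]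
  by_cases hL : 0 ≤ L
  · simp [hL]
  · simp [hL, gaussBinom_eq_zero (N := M) (k := L) (.inl (by omega))]

end Seed

/-! ### Fermionic sums -/

section Fermionic

lemma cartanA_zero_zero (n : ℕ) : cartanA (n + 1) 0 0 = 2 := if_pos rfl

lemma cartanA_succ_succ {n : ℕ} (i j : Fin n) :
    cartanA (n + 1) i.succ j.succ = cartanA n i j := by
  simp [cartanA]

lemma cartanA_zero_succ {n : ℕ} (j : Fin n) :
    cartanA (n + 1) 0 j.succ = if (j : ℕ) = 0 then -1 else 0 := by
  simp only [cartanA, Fin.val_zero, Fin.val_succ, if_neg (Fin.succ_ne_zero j).symm,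
    abs_eq zero_le_one]
  refine if_congr ?_ rfl rfl
  push_cast
  omega

lemma cartanA_comm {n : ℕ} (i j : Fin n) : cartanA n i j = cartanA n j i := by
  simp only [cartanA, eq_comm (a := i), abs_sub_comm (i : ℤ)]

/-- The first entry `m₁` of a vector, with the value `0` for the empty vector. -/
def firstEntry {n : ℕ} (m : Fin n → ℕ) : ℤ :=
  ∑ j : Fin n, if (j : ℕ) = 0 then (m j : ℤ) else 0

/-- The quadratic form `m · C_n · m` of the Cartan matrix. -/
def cartanForm {n : ℕ} (m : Fin n → ℕ) : ℤ :=
  ∑ i : Fin n, ∑ j : Fin n, (m i : ℤ) * cartanA n i j * (m j : ℤ)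

/-- The product of Gaussian binomials `∏ j, [L δ_{j,1} + m_j - (C_n m)_j choose m_j]` of the
fermionic sum, in base `s ^ 2`. -/
def cartanProd (s : K) {n : ℕ} (L : ℤ) (m : Fin n → ℕ) : K :=
  ∏ j : Fin n, gaussBinom (s ^ 2)
    (L * (if (j : ℕ) = 0 then 1 else 0) + (m j : ℤ) - ∑ k : Fin n, cartanA n j k * (m k : ℤ)) (m j)

lemma firstEntry_cons {n : ℕ} (x : ℕ) (m : Fin n → ℕ) :
    firstEntry (Fin.cons x m : Fin (n + 1) → ℕ) = x := by
  simp [firstEntry]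

lemma sum_cartanA_zero_succ {n : ℕ} (m : Fin n → ℕ) :
    ∑ j : Fin n, cartanA (n + 1) 0 j.succ * (m j : ℤ) = -firstEntry m := by
  rw [firstEntry, ← sum_neg_distrib]
  refine sum_congr rfl fun j _ ↦ ?_
  rw [cartanA_zero_succ]
  split_ifs <;> ring

lemma cartanForm_cons {n : ℕ} (x : ℕ) (m : Fin n → ℕ) :
    cartanForm (Fin.cons x m : Fin (n + 1) → ℕ) =
      2 * (x : ℤ) ^ 2 - 2 * x * firstEntry m + cartanForm m := by
  have hrow : ∑ j : Fin n, x * cartanA (n + 1) 0 j.succ * (m j : ℤ) = x * -firstEntry m := by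
    simp only [mul_assoc, ← mul_sum, sum_cartanA_zero_succ]
  have hcol : ∑ i : Fin n, m i * cartanA (n + 1) i.succ 0 * (x : ℤ) = x * -firstEntry m := by
    rw [← hrow]
    exact sum_congr rfl fun i _ ↦ by rw [cartanA_comm]; ring
  simp only [cartanForm, Fin.sum_univ_succ, Fin.cons_zero, Fin.cons_succ, cartanA_zero_zero,
    cartanA_succ_succ, sum_add_distrib, hrow, hcol]
  ring

lemma cartanProd_cons {n : ℕ} (L : ℤ) (x : ℕ) (m : Fin n → ℕ) :
    cartanProd s L (Fin.cons x m : Fin (n + 1) → ℕ) =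
      gaussBinom (s ^ 2) (L - x + firstEntry m) x * cartanProd s x m := by
  simp only [cartanProd, Fin.prod_univ_succ, Fin.sum_univ_succ, Fin.cons_zero, Fin.cons_succ,
    cartanA_zero_zero, cartanA_succ_succ, sum_cartanA_zero_succ]
  congr 1
  · congr 1
    simp only [Fin.val_zero, if_true]
    ring
  · refine prod_congr rfl fun j _ ↦ ?_
    congr 1
    rw [cartanA_comm, cartanA_zero_succ, Fin.val_succ, if_neg (Nat.succ_ne_zero _)]
    split_ifs <;> ring

lemma sum_piFinset_cons {A : Type*} [AddCommMonoid A] {n : ℕ} (R : Finset ℕ)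
    (f : (Fin (n + 1) → ℕ) → A) :
    ∑ m ∈ Fintype.piFinset (fun _ : Fin (n + 1) ↦ R), f m =
      ∑ x ∈ R, ∑ m ∈ Fintype.piFinset (fun _ : Fin n ↦ R), f (Fin.cons x m) := by
  rw [← sum_product']
  exact sum_equiv (Fin.consEquiv fun _ ↦ ℕ).symm
    (fun m ↦ by simp [Fin.forall_fin_succ, Fin.tail]) fun m _ ↦ by simp

/-- The fermionic sum in two variables. The parameter `N` truncates the summation to
`0 ≤ m_j ≤ N`, which loses nothing for `L ≤ N`. -/
def fermionicSum (s : K) (N n : ℕ) (L M : ℤ) : K :=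
  ∑ m ∈ Fintype.piFinset (fun _ : Fin n ↦ range (N + 1)),
    s ^ (L ^ 2 - 2 * L * firstEntry m + cartanForm m) *
      gaussBinom (s ^ 2) (M + firstEntry m) L * cartanProd s L m

lemma fermionicSum_zero (N : ℕ) (L M : ℤ) :
    fermionicSum s N 0 L M = s ^ (L ^ 2) * gaussBinom (s ^ 2) M L := by
  simp [fermionicSum, firstEntry, cartanForm, cartanProd]

lemma fermionicSum_succ (hs : s ≠ 0) (N n : ℕ) (L M : ℤ) :
    fermionicSum s N (n + 1) L M = ∑ x ∈ range (N + 1),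
      s ^ ((L - x) ^ 2) * gaussBinom (s ^ 2) (M + x) L * fermionicSum s N n x (L - x) := by
  rw [fermionicSum, sum_piFinset_cons]
  refine sum_congr rfl fun x _ ↦ ?_
  rw [fermionicSum, mul_sum]
  refine sum_congr rfl fun m _ ↦ ?_
  rw [firstEntry_cons, cartanForm_cons, cartanProd_cons,
    show L ^ 2 - 2 * L * x + (2 * (x : ℤ) ^ 2 - 2 * x * firstEntry m + cartanForm m) =
      (L - x) ^ 2 + (x ^ 2 - 2 * x * firstEntry m + cartanForm m) by ring, zpow_add₀ hs]
  ring

lemma baileyStep_eq_sum_range {F : ℤ → ℤ → K} (hF : QuadrantSupported F) {N : ℕ} {L : ℤ}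
    (hL : L ≤ N) (M : ℤ) :
    baileyStep s F L M = ∑ x ∈ range (N + 1),
      s ^ ((L - x) ^ 2) * gaussBinom (s ^ 2) (M + x) L * F x (L - x) := by
  rw [baileyStep_eq_finsum, ← finsum_comp_equiv (Equiv.subLeft L), finsum_eq_sum_range N]
  · refine sum_congr rfl fun x _ ↦ ?_
    rw [Equiv.subLeft_apply, sub_sub_cancel, show L + M - (L - x) = M + x by ring]
  · intro x hx
    rw [Equiv.subLeft_apply] at hx
    have := hF (right_ne_zero_of_mul hx)
    omega

theorem fermionicSum_eq_bosonicSum (hs : s ≠ 0) (N n : ℕ) {L : ℤ} (hL : L ≤ N) (M : ℤ) :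
    fermionicSum s N n L M = bosonicSum s (n + 4) L M := by
  induction n generalizing L M with
  | zero => rw [fermionicSum_zero, Nat.cast_zero, zero_add, bosonicSum_four hs]
  | succ n ih =>
    rw [fermionicSum_succ hs, show ((n + 1 : ℕ) : ℤ) + 4 = n + 4 + 1 by push_cast; ring,
      ← baileyStep_bosonicSum hs (by omega),
      baileyStep_eq_sum_range (quadrantSupported_bosonicSum _) hL]
    refine sum_congr rfl fun x hx ↦ ?_
    rw [ih (by rw [mem_range] at hx; omega)]

lemma diagSum_eq_sum_range {F : ℤ → ℤ → K} (hF : QuadrantSupported F) (L : ℕ) :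
    diagSum s F L = ∑ x ∈ range (L + 1), s ^ ((x : ℤ) ^ 2) * F x (L - x) := by
  rw [diagSum, ← finsum_comp_equiv (Equiv.subLeft (L : ℤ)), finsum_eq_sum_range L]
  · simp only [Equiv.subLeft_apply, sub_sub_cancel]
  · intro x hx
    rw [Equiv.subLeft_apply, sub_sub_cancel] at hx
    have := hF (right_ne_zero_of_mul hx)
    omega

lemma diagSum_bosonicSum_three (hs : s ≠ 0) {L : ℤ} (hL : 0 ≤ L) :
    diagSum s (bosonicSum s 3) L = 1 := by
  rw [diagSum, finsum_eq_single _ L fun i hi ↦ by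
    rw [bosonicSum_three hs, if_neg (by omega), mul_zero], bosonicSum_three hs]
  simp [hL]

theorem sum_cartanProd_eq_diagSum (hs : s ≠ 0) (L n : ℕ) :
    ∑ m ∈ Fintype.piFinset (fun _ : Fin n ↦ range (L + 1)), s ^ cartanForm m * cartanProd s L m =
      diagSum s (bosonicSum s (n + 3)) L := by
  cases n with
  | zero =>
    rw [Nat.cast_zero, zero_add, diagSum_bosonicSum_three hs (by omega)]
    simp [cartanForm, cartanProd]
  | succ n =>
    rw [show ((n + 1 : ℕ) : ℤ) + 3 = n + 4 by push_cast; ring,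
      diagSum_eq_sum_range (quadrantSupported_bosonicSum _), sum_piFinset_cons]
    refine sum_congr rfl fun x hx ↦ ?_
    rw [← fermionicSum_eq_bosonicSum hs L n (by rw [mem_range] at hx; omega), fermionicSum, mul_sum]
    refine sum_congr rfl fun m _ ↦ ?_
    rw [cartanForm_cons, cartanProd_cons,
      show 2 * (x : ℤ) ^ 2 - 2 * x * firstEntry m + cartanForm m =
        x ^ 2 + (x ^ 2 - 2 * x * firstEntry m + cartanForm m) by ring, zpow_add₀ hs]
    ring

end Fermionic

/-! ### Comparison with the quotient definitions -/

section Transcendental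

lemma qPoch_succ (x : RatFunc ℚ) (n : ℕ) :
    qPoch x (n + 1) = qPoch x n * (1 - x ^ (n + 1)) :=
  prod_range_succ _ n

lemma gaussBinom_mul_qPoch {x : RatFunc ℚ} (hx : x ≠ 0) (i j : ℕ) :
    gaussBinom x (i + j) i * (qPoch x i * qPoch x j) = qPoch x (i + j) := by
  induction i with
  | zero => simp [gaussBinom_zero_right, qPoch]
  | succ i ih =>
    have h := one_sub_zpow_mul_gaussBinom hx ((i + 1 : ℕ) + j) (i + 1 : ℕ)
    rw [show ((i + 1 : ℕ) + j : ℤ) - 1 = i + j by push_cast; ring,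
      show ((i + 1 : ℕ) : ℤ) - 1 = i by push_cast; ring,
      show ((i + 1 : ℕ) + j : ℤ) = (i + j + 1 : ℕ) by push_cast; ring] at h
    simp only [zpow_natCast] at h
    rw [show ((i + 1 : ℕ) + j : ℤ) = (i + j + 1 : ℕ) by push_cast; ring,
      show i + 1 + j = i + j + 1 by ring, qPoch_succ, qPoch_succ, ← ih]
    linear_combination qPoch x i * qPoch x j * h

lemma qPoch_ne_zero {x : RatFunc ℚ} (hx : ∀ n, n ≠ 0 → x ^ n ≠ 1) (n : ℕ) : qPoch x n ≠ 0 :=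
  prod_ne_zero_iff.mpr fun j _ ↦ sub_ne_zero.mpr (hx _ j.succ_ne_zero).symm

lemma qBin_eq_gaussBinom {x : RatFunc ℚ} (h₀ : x ≠ 0) (hx : ∀ n, n ≠ 0 → x ^ n ≠ 1) (N k : ℤ) :
    qBin x N k = gaussBinom x N k := by
  rw [qBin]
  split_ifs with h
  · obtain ⟨i, rfl⟩ := Int.eq_ofNat_of_zero_le h.1
    obtain ⟨j, rfl⟩ := Int.le.dest h.2
    rw [add_sub_cancel_left, ← Nat.cast_add, Int.toNat_natCast, Int.toNat_natCast,
      Int.toNat_natCast, div_eq_iff (mul_ne_zero (qPoch_ne_zero hx i) (qPoch_ne_zero hx j)),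
      Nat.cast_add, gaussBinom_mul_qPoch h₀]
  · rw [gaussBinom_eq_zero (by omega)]

lemma qTri_eq_gaussTrinomial {x : RatFunc ℚ} (h₀ : x ≠ 0) (hx : ∀ n, n ≠ 0 → x ^ n ≠ 1) (L : ℕ)
    (A : ℤ) : qTri x L A A = gaussTrinomial x L A := by
  rw [gaussTrinomial, finsum_eq_sum_range L fun k hk ↦ ?_, qTri]
  · simp only [qBin_eq_gaussBinom h₀ hx, gaussTrinomialTerm]
  · have := bounds_of_gaussTrinomialTerm_ne_zero hk
    omega

lemma ratFunc_X_pow_ne_one {F : Type*} [Field F] {n : ℕ} (hn : n ≠ 0) :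
    (RatFunc.X : RatFunc F) ^ n ≠ 1 := fun h ↦
  RatFunc.transcendental_X (.of_pow (pos_of_ne_zero hn) (h ▸ isAlgebraic_one))

lemma qq_sq_pow_ne_one (n : ℕ) (hn : n ≠ 0) : (qq ^ 2) ^ n ≠ 1 := by
  rw [← pow_mul]
  exact ratFunc_X_pow_ne_one (mul_ne_zero two_ne_zero hn)

lemma qBin_qq_sq (N k : ℤ) : qBin (qq ^ 2) N k = gaussBinom (qq ^ 2) N k :=
  qBin_eq_gaussBinom (pow_ne_zero 2 RatFunc.X_ne_zero) qq_sq_pow_ne_one N k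

lemma qTri_qq_sq (L : ℕ) (A : ℤ) : qTri (qq ^ 2) L A A = gaussTrinomial (qq ^ 2) L A :=
  qTri_eq_gaussTrinomial (pow_ne_zero 2 RatFunc.X_ne_zero) qq_sq_pow_ne_one L A

end Transcendental

theorem stmt19_general {K : Type*} [Field K] {s : K} (hs : s ≠ 0) (L n : ℕ) :
    ∑ m ∈ Fintype.piFinset (fun _ : Fin n ↦ range (L + 1)),
        s ^ (∑ i : Fin n, ∑ j : Fin n, (m i : ℤ) * cartanA n i j * (m j : ℤ)) *
          ∏ j : Fin n,
            gaussBinom (s ^ 2)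
              ((L : ℤ) * (if (j : ℕ) = 0 then 1 else 0) + (m j : ℤ) -
                ∑ k : Fin n, cartanA n j k * (m k : ℤ))
              (m j : ℤ) =
      ∑ j ∈ Icc (-(L : ℤ)) L,
        (s ^ (j * (((n : ℤ) + 3) * ((n : ℤ) + 4) * j + 2)) *
            gaussTrinomial (s ^ 2) L (((n : ℤ) + 4) * j) -
          s ^ ((((n : ℤ) + 3) * j + 2) * (((n : ℤ) + 4) * j + 2)) *
            gaussTrinomial (s ^ 2) L (((n : ℤ) + 4) * j + 2)) := by
  refine (sum_cartanProd_eq_diagSum hs L n).trans ?_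
  rw [diagSum_bosonicSum_natCast hs (by omega), show (n : ℤ) + 3 + 1 = n + 4 by ring]

theorem stmt19 (L n : ℕ) (hn : 1 ≤ n) :
    ∑ m ∈ Fintype.piFinset (fun _ : Fin n => Finset.range (L + 1)),
        qq ^ (∑ i : Fin n, ∑ j : Fin n, (m i : ℤ) * cartanA n i j * (m j : ℤ)) *
          ∏ j : Fin n,
            qBin (qq ^ 2)
              ((L : ℤ) * (if (j : ℕ) = 0 then 1 else 0) + (m j : ℤ) -
                ∑ k : Fin n, cartanA n j k * (m k : ℤ))
              (m j : ℤ) =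
      ∑ j ∈ Finset.Icc (-(L : ℤ)) (L : ℤ),
        (qq ^ (j * (((n : ℤ) + 3) * ((n : ℤ) + 4) * j + 2)) *
            qTri (qq ^ 2) L (((n : ℤ) + 4) * j) (((n : ℤ) + 4) * j) -
          qq ^ ((((n : ℤ) + 3) * j + 2) * (((n : ℤ) + 4) * j + 2)) *
            qTri (qq ^ 2) L (((n : ℤ) + 4) * j + 2) (((n : ℤ) + 4) * j + 2)) := by
  simp only [qBin_qq_sq, qTri_qq_sq]
  exact stmt19_general RatFunc.X_ne_zero L n
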